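/- If C is a permutation class containing only finitely many simple permutations, then the generating function of the set of involutions in C is algebraic over ℚ[x]. -/

import Mathlib

/-- A permutation of length `n`. -/
abbrev Perm (n : ℕ) := Equiv.Perm (Fin n)

/-- `σ` is contained in `π`: there is a strictly increasing sequence of indices of `π`
on which `π` is order isomorphic to `σ`. -/
def Contains {m n : ℕ} (σ : Perm m) (π : Perm n) : Prop :=
  ∃ f : Fin m → Fin n, StrictMono f ∧ ∀ s t : Fin m, π (f s) < π (f t) ↔ σ s < σ t

/-- A permutation class: a downset in the containment order. -/
def IsPermClass (C : ∀ n, Set (Perm n)) : Prop :=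
  ∀ ⦃m n : ℕ⦄ (σ : Perm m) (π : Perm n), π ∈ C n → Contains σ π → σ ∈ C m

/-- A set of contiguous values. -/
def IsRange {n : ℕ} (I : Finset (Fin n)) : Prop :=
  ∀ ⦃i j l : Fin n⦄, i ∈ I → l ∈ I → i ≤ j → j ≤ l → j ∈ I

/-- An interval of `π`: a set of contiguous indices mapped to a set of contiguous values. -/
def IsPermInterval {n : ℕ} (π : Perm n) (I : Finset (Fin n)) : Prop :=
  IsRange I ∧ IsRange (I.image π)

/-- A permutation is simple if its only intervals have size `0`, `1`, or `n`. -/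
def IsSimple {n : ℕ} (π : Perm n) : Prop :=
  ∀ I : Finset (Fin n), IsPermInterval π I → I.card ≤ 1 ∨ I.card = n

/-- The set of simple permutations belonging to the class `C` is finite. -/
def FinitelyManySimples (C : ∀ n, Set (Perm n)) : Prop :=
  {p : Σ n : ℕ, Perm n | p.2 ∈ C p.1 ∧ IsSimple p.2}.Finite

/-- The generating function `∑_{n ≥ 1} |S_n| xⁿ` of a set of permutations. -/
noncomputable def genFun (S : ∀ n, Set (Perm n)) : PowerSeries ℚ :=
  PowerSeries.mk fun n => if n = 0 then 0 else (Nat.card (S n) : ℚ)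

/-- A power series `f` is algebraic over `ℚ[x]` if there is a nonzero polynomial
`P(x,y) ∈ ℚ[x][y]` with `P(x,f) = 0`. -/
def IsAlgebraicOverQx (f : PowerSeries ℚ) : Prop :=
  ∃ P : Polynomial (Polynomial ℚ), P ≠ 0 ∧
    Polynomial.eval₂ Polynomial.coeToPowerSeries.ringHom f P = 0

/-!
Every permutation of length at least two is in a unique canonical way the inflation of a simple
permutation: the blocks are arbitrary, except that for a simple permutation of length two the first
block may not itself be an inflation of it. Let `D` be an inverse-closed class with finitely many
simple permutations. The class of all iterated inflations of the simple permutations in `D` is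
partially well ordered, by Nash-Williams' minimal bad sequence argument, so that only finitely many
minimal permutations of that class are missing from `D`; let `N` bound their lengths. Give each
permutation as its colour the set of its patterns of length at most `N`, together with the
information relevant to canonicity. Then the colour of an inflation, and whether it lies in `D`,
depend only on the colours of the blocks, so the canonical inflation expresses the generating
functions of the colours as polynomials in each other, without linear terms.

An involution is a canonical inflation of a simple involution in which the blocks at the fixed
points are involutions and those at a `2`-cycle are inverse to each other, or it has the form
`a ⊖ a⁻¹` or `a ⊖ m ⊖ a⁻¹` with `m` an involution. Hence the generating functions of the involutions
of each colour satisfy a polynomial system as well, with coefficients built from the generating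
functions in `x²` of all permutations of a colour. The Jacobian matrices of both systems are the
identity at the origin. A derivation over `ℚ(x)` maps the solution to a vector in the kernel of the
Jacobian matrix and therefore vanishes, which makes the solution algebraic.
-/

section JacobianCriterion

open IntermediateField MvPolynomial

theorem derivation_adjoin_eq_zero {K E M : Type*} [Field K] [Field E] [Algebra K E] {S : Set E}
    [AddCommGroup M] [Module K M] [Module (adjoin K S) M] (D : Derivation K (adjoin K S) M)
    (h : ∀ x (hx : x ∈ S), D ⟨x, subset_adjoin K S hx⟩ = 0) : D = 0 := by
  ext ⟨x, hx⟩
  induction hx using adjoin_induction with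
  | mem x hx => exact h x hx
  | algebraMap x => exact D.map_algebraMap x
  | add x y hx hy hx' hy' =>
    exact (D.map_add ⟨x, hx⟩ ⟨y, hy⟩).trans (by simp [hx', hy'])
  | inv x hx hx' =>
    exact (D.leibniz_inv ⟨x, hx⟩).trans (by simp [hx'])
  | mul x y hx hy hx' hy' =>
    exact (D.leibniz ⟨x, hx⟩ ⟨y, hy⟩).trans (by simp [hx', hy'])

/-- In characteristic zero algebraic extensions are unramified, that is, have no nonzero
differentials, and differentials are detected by derivations. -/
theorem isAlgebraic_of_forall_derivation_eq_zero (K L : Type*) [Field K] [Field L] [CharZero K]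
    [Algebra K L] [Algebra.EssFiniteType K L] (h : ∀ D : Derivation K L L, D = 0) :
    Algebra.IsAlgebraic K L := by
  have hΩ : Subsingleton (Ω[L⁄K]) := by
    refine subsingleton_of_forall_eq 0 fun ω ↦
      (Module.forall_dual_apply_eq_zero_iff L ω).1 fun φ ↦ ?_
    have hφ : φ = 0 := (KaehlerDifferential.linearMapEquivDerivation K L).injective
      ((h _).trans (map_zero _).symm)
    rw [hφ, LinearMap.zero_apply]
  have : Algebra.FormallyUnramified K L := ⟨hΩ⟩
  have : Algebra.IsSeparable K L := (Algebra.FormallyUnramified.iff_isSeparable (K := K) L).1 this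
  exact inferInstance

theorem derivation_aeval {R A M σ : Type*} [Fintype σ] [CommRing R] [CommRing A] [AddCommGroup M]
    [Algebra R A] [Module A M] [Module R M] (D : Derivation R A M) (x : σ → A)
    (p : MvPolynomial σ R) :
    D (aeval x p) = ∑ j, aeval x (pderiv j p) • D (x j) := by
  classical
  induction p using MvPolynomial.induction_on with
  | C a => simp [← algebraMap_eq]
  | add p q hp hq => simp only [map_add, hp, hq, add_smul, Finset.sum_add_distrib]
  | mul_X p i hp =>
    have hX : ∑ j, (aeval x p * aeval x (pderiv j (X i : MvPolynomial σ R))) • D (x j) =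
        aeval x p • D (x i) := by
      rw [Finset.sum_eq_single i (fun j _ hj ↦ by simp [pderiv_X_of_ne hj.symm]) (by simp)]
      simp
    simp only [map_mul, aeval_X, Derivation.leibniz, hp, smul_eq_mul, map_add, add_smul,
      Finset.sum_add_distrib, Finset.smul_sum, smul_smul, hX]

/-- A derivation over `K` of `K(f)` maps `f` to a vector in the kernel of the Jacobian matrix. -/
theorem isAlgebraic_of_jacobian_ne_zero {K E κ : Type*} [Field K] [Field E] [CharZero K]
    [Algebra K E] [Fintype κ] [DecidableEq κ] (f : κ → E) (P : κ → MvPolynomial κ K)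
    (hP : ∀ t, aeval f (P t) = 0)
    (hdet : (Matrix.of fun t j ↦ aeval f (pderiv j (P t))).det ≠ 0) (t : κ) :
    IsAlgebraic K (f t) := by
  let L := adjoin K (Set.range f)
  let F (t : κ) : L := ⟨f t, subset_adjoin K _ ⟨t, rfl⟩⟩
  have hval (p : MvPolynomial κ K) : (aeval F p : E) = aeval f p :=
    (comp_aeval_apply F L.val p)
  have hdetL : (Matrix.of fun t j ↦ aeval F (pderiv j (P t))).det ≠ 0 := by
    refine fun h ↦ hdet ?_
    have := congrArg (algebraMap L E) h
    rw [RingHom.map_det, map_zero] at this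
    rw [← this]
    congr 1
    ext i j
    exact (hval _).symm
  have hDF (D : Derivation K L L) : (fun t ↦ D (F t)) = 0 := by
    refine Matrix.eq_zero_of_mulVec_eq_zero hdetL (funext fun t ↦ ?_)
    have : aeval F (P t) = 0 := Subtype.ext ((hval _).trans (hP t))
    exact (derivation_aeval D F (P t)).symm.trans (by rw [this, map_zero]; rfl)
  have : Algebra.EssFiniteType K L :=
    essFiniteType_iff.2 (fg_adjoin_of_finite (Set.finite_range f))
  have : Algebra.IsAlgebraic K L := isAlgebraic_of_forall_derivation_eq_zero K L fun D ↦
    derivation_adjoin_eq_zero D fun _ ⟨t, ht⟩ ↦ by subst ht; exact congrFun (hDF D) t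
  exact (isAlgebraic_algebraMap_iff (A := E) (algebraMap L E).injective).2
    (Algebra.IsAlgebraic.isAlgebraic (R := K) (F t))

theorem isAlgebraic_of_jacobian_ne_zero_of_isDomain {A S κ : Type*} [CommRing A] [IsDomain A]
    [CharZero A] [CommRing S] [IsDomain S] [Algebra A S] [FaithfulSMul A S] [Fintype κ]
    [DecidableEq κ] (f : κ → S) (P : κ → MvPolynomial κ A) (hP : ∀ t, aeval f (P t) = 0)
    (hdet : (Matrix.of fun t j ↦ aeval f (pderiv j (P t))).det ≠ 0) (t : κ) :
    IsAlgebraic A (f t) := by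
  let K := FractionRing A
  let E := FractionRing S
  let e := algebraMap S E
  have he : Function.Injective e := IsFractionRing.injective S E
  have : FaithfulSMul A E := (faithfulSMul_iff_algebraMap_injective A E).2 <| by
    rw [IsScalarTower.algebraMap_eq A S E]
    exact he.comp (FaithfulSMul.algebraMap_injective A S)
  let _ : Algebra K E := FractionRing.liftAlgebra A E
  have hval (p : MvPolynomial κ A) :
      aeval (fun t ↦ e (f t)) (map (algebraMap A K) p) = e (aeval f p) := by
    rw [aeval_map_algebraMap]
    exact aeval_algebraMap_apply E f p
  have : CharZero K := charZero_of_injective_algebraMap (IsFractionRing.injective A K)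
  refine (isAlgebraic_algebraMap_iff he).1 ((IsFractionRing.isAlgebraic_iff A K E).2 ?_)
  refine isAlgebraic_of_jacobian_ne_zero (fun t ↦ e (f t))
    (fun t ↦ map (algebraMap A K) (P t)) (fun t ↦ by rw [hval, hP, map_zero]) ?_ t
  have : (Matrix.of fun t j ↦ aeval (fun t ↦ e (f t)) (pderiv j (map (algebraMap A K) (P t)))) =
      e.mapMatrix (Matrix.of fun t j ↦ aeval f (pderiv j (P t))) := by
    ext t j
    simp only [pderiv_map, hval]
    rfl
  rw [this, ← RingHom.map_det]
  exact fun h ↦ hdet (he (h.trans (map_zero _).symm))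

end JacobianCriterion

section ProperSystems

open MvPolynomial
open scoped PowerSeries

/-- The ring of power series over `k` that are algebraic over `k[X]`. -/
noncomputable abbrev AlgebraicPowerSeries (k : Type*) [Field k] : Subalgebra (Polynomial k) k⟦X⟧ :=
  Subalgebra.algebraicClosure (Polynomial k) k⟦X⟧

variable {k κ : Type*} [Field k]

/-- `g` is a polynomial in the series `f t`, with algebraic coefficients, whose linear part
vanishes at the origin. Systems `f t = P t f` of this shape are called proper; constant terms are
unrestricted here. -/
def IsProperIn (f : κ → k⟦X⟧) (g : k⟦X⟧) : Prop :=
  ∃ P : MvPolynomial κ (AlgebraicPowerSeries k),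
    (∀ t, PowerSeries.constantCoeff (P.coeff (Finsupp.single t 1)).1 = 0) ∧ aeval f P = g

namespace IsProperIn

variable {f : κ → k⟦X⟧} {g : k⟦X⟧}

theorem of_isAlgebraic (f : κ → k⟦X⟧) (hg : IsAlgebraic (Polynomial k) g) :
    IsProperIn f g := by
  classical
  exact ⟨C ⟨g, hg⟩, fun t ↦ by simp [coeff_C, eq_comm], aeval_C f _⟩

theorem sum {ι : Type*} {s : Finset ι} {g : ι → k⟦X⟧}
    (h : ∀ i ∈ s, IsProperIn f (g i)) : IsProperIn f (∑ i ∈ s, g i) := by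
  refine Finset.sum_induction g (IsProperIn f) ?_ (of_isAlgebraic f isAlgebraic_zero) h
  rintro _ _ ⟨P, hP, rfl⟩ ⟨Q, hQ, rfl⟩
  exact ⟨P + Q, fun t ↦ by simp [hP, hQ], map_add _ _ _⟩

theorem mul_prod {ι : Type*} [Fintype ι] {c : k⟦X⟧} (hc : IsAlgebraic (Polynomial k) c)
    (hc0 : PowerSeries.constantCoeff c = 0) (col : ι → κ) :
    IsProperIn f (c * ∏ i, f (col i)) :=
  ⟨C ⟨c, hc⟩ * ∏ i, X (col i), fun t ↦ by simp [coeff_C_mul, hc0], by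
    simp only [map_mul, map_prod, aeval_X, aeval_C]
    rfl⟩

theorem prod {ι : Type*} [Fintype ι] (hι : Fintype.card ι ≠ 1) (col : ι → κ) :
    IsProperIn f (∏ i, f (col i)) := by
  classical
  refine ⟨∏ i, X (col i), fun t ↦ ?_, by simp⟩
  have hcoeff : (∏ i, X (col i) : MvPolynomial κ (AlgebraicPowerSeries k)) =
      monomial (∑ i, Finsupp.single (col i) 1) 1 :=
    (monomial_sum_one _ _).symm
  rw [hcoeff, coeff_monomial, if_neg, ZeroMemClass.coe_zero, map_zero]
  intro h
  have := congrArg Finsupp.degree h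
  simp only [map_sum, Finsupp.degree_single] at this
  exact hι (by simpa using this)

end IsProperIn

theorem constantCoeff_aeval_of_constantCoeff_eq_zero {f : κ → k⟦X⟧}
    (hf : ∀ t, PowerSeries.constantCoeff (f t) = 0)
    (P : MvPolynomial κ (AlgebraicPowerSeries k)) :
    PowerSeries.constantCoeff (aeval f P) =
      PowerSeries.constantCoeff (P.coeff 0).1 := by
  induction P using MvPolynomial.induction_on with
  | C a => simp
  | add p q hp hq => simp [hp, hq]
  | mul_X p t _ => simp [hf, ← constantCoeff_eq]

theorem isAlgebraic_of_isProperIn [CharZero k] [Finite κ] {f : κ → k⟦X⟧}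
    (hf : ∀ t, PowerSeries.constantCoeff (f t) = 0) (h : ∀ t, IsProperIn f (f t)) (t : κ) :
    IsAlgebraic (Polynomial k) (f t) := by
  classical
  have := Fintype.ofFinite κ
  choose P hP hPf using h
  have hjac : PowerSeries.constantCoeff.mapMatrix
      (Matrix.of fun t j ↦ aeval f (pderiv j (X t - P t))) = 1 := by
    ext t j
    have hlin : PowerSeries.constantCoeff (aeval f (pderiv j (P t))) = 0 := by
      simp [constantCoeff_aeval_of_constantCoeff_eq_zero hf, coeff_pderiv, hP]
    have hX : aeval f (pderiv j (X t : MvPolynomial κ (AlgebraicPowerSeries k))) =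
        (1 : Matrix κ κ k⟦X⟧) t j := by
      rcases eq_or_ne t j with rfl | hne
      · simp
      · simp [pderiv_X_of_ne hne, hne]
    simp only [RingHom.mapMatrix_apply, Matrix.map_apply, Matrix.of_apply, map_sub, hlin, hX,
      sub_zero, Matrix.one_apply, apply_ite PowerSeries.constantCoeff, map_one, map_zero]
  have : CharZero k⟦X⟧ := charZero_of_injective_algebraMap (R := k) PowerSeries.C_injective
  have : CharZero (AlgebraicPowerSeries k) :=
    ⟨fun m n h ↦ Nat.cast_injective (R := k⟦X⟧) (congrArg Subtype.val h)⟩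
  have : IsAlgebraic (AlgebraicPowerSeries k) (f t) := by
    refine isAlgebraic_of_jacobian_ne_zero_of_isDomain f (fun t ↦ X t - P t)
      (fun t ↦ by rw [map_sub, aeval_X, hPf, sub_self]) (fun h0 ↦ ?_) t
    have := congrArg PowerSeries.constantCoeff h0
    rw [RingHom.map_det, hjac, Matrix.det_one, map_zero] at this
    exact one_ne_zero this
  exact this.restrictScalars (Polynomial k)

end ProperSystems

section BiOrders

/-- Two strict total orders on the same set, indexed by `Bool`. A permutation `π` is encoded by the
order of its indices (`false`) and the order of its values (`true`). -/
structure BiOrder (α : Type*) where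
  r : Bool → α → α → Prop
  isStrictTotalOrder : ∀ b, IsStrictTotalOrder α (r b)

namespace BiOrder

attribute [instance] BiOrder.isStrictTotalOrder

variable {α β γ κ : Type*} {A : BiOrder α} {B : BiOrder β} {C : BiOrder γ} {S : BiOrder κ}
  {f : α → β} {q : α → κ} {b : Bool} {x y : α}

theorem ne_of_r (h : A.r b x y) : x ≠ y := by
  rintro rfl
  exact irrefl_of (A.r b) x h

theorem r_of_ne_of_not_r (hne : x ≠ y) (h : ¬A.r b y x) : A.r b x y :=
  ((trichotomous_of (A.r b) x y).resolve_right (not_or.2 ⟨hne, h⟩))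

/-- The pair of orders with the two orders exchanged; it encodes the inverse permutation. -/
def swap (A : BiOrder α) : BiOrder α where
  r b := A.r !b
  isStrictTotalOrder b := A.isStrictTotalOrder !b

/-- The pair of orders pulled back along an injection. -/
def comap (A : BiOrder β) (f : α → β) (hf : f.Injective) : BiOrder α where
  r b := f ⁻¹'o A.r b
  isStrictTotalOrder b := (RelEmbedding.preimage ⟨f, hf⟩ (A.r b)).isStrictTotalOrder

/-- The pair of orders induced on a subset. -/
abbrev restrict (A : BiOrder α) (s : Set α) : BiOrder s := A.comap _ Subtype.val_injective

/-- The lexicographic sum of the `B i` over `S`; it encodes the inflation of a permutation. -/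
def lex {α : κ → Type*} (S : BiOrder κ) (B : ∀ i, BiOrder (α i)) : BiOrder (Σ i, α i) where
  r b := Sigma.Lex (S.r b) fun i ↦ (B i).r b
  isStrictTotalOrder _ := {}

/-- The map `f` preserves both orders. -/
def IsEmbedding (A : BiOrder α) (B : BiOrder β) (f : α → β) : Prop :=
  ∀ b x y, A.r b x y → B.r b (f x) (f y)

namespace IsEmbedding

theorem id (A : BiOrder α) : A.IsEmbedding A id := fun _ _ _ h ↦ h

theorem injective (h : A.IsEmbedding B f) : f.Injective :=
  injective_of_increasing (A.r false) (B.r false) f (h false _ _)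

theorem r_iff (h : A.IsEmbedding B f) (b : Bool) (x y : α) : B.r b (f x) (f y) ↔ A.r b x y :=
  (RelEmbedding.ofMonotone f (h b)).map_rel_iff

theorem comp {g : β → γ} (hg : B.IsEmbedding C g) (hf : A.IsEmbedding B f) :
    A.IsEmbedding C (g ∘ f) :=
  fun b _ _ h ↦ hg b _ _ (hf b _ _ h)

theorem symm {e : α ≃ β} (h : A.IsEmbedding B e) : B.IsEmbedding A e.symm := by
  intro b x y hxy
  rw [← h.r_iff]
  simpa using hxy

theorem swap (h : A.IsEmbedding B f) : A.swap.IsEmbedding B.swap f := fun b ↦ h !b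

end IsEmbedding

theorem isEmbedding_comap (B : BiOrder β) (hf : f.Injective) : (B.comap f hf).IsEmbedding B f :=
  fun _ _ _ h ↦ h

theorem isEmbedding_sigma_mk {α : κ → Type*} (S : BiOrder κ) (B : ∀ i, BiOrder (α i)) (i : κ) :
    (B i).IsEmbedding (S.lex B) (Sigma.mk i) :=
  fun _ _ _ h ↦ .right _ _ h

theorem isEmbedding_section {α : κ → Type*} (S : BiOrder κ) (B : ∀ i, BiOrder (α i))
    (f : ∀ i, α i) : S.IsEmbedding (S.lex B) fun i ↦ ⟨i, f i⟩ :=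
  fun _ _ _ h ↦ .left _ _ h

theorem isEmbedding_sigma_map {α α' : κ → Type*} (S : BiOrder κ) {B : ∀ i, BiOrder (α i)}
    {B' : ∀ i, BiOrder (α' i)} {f : ∀ i, α i → α' i} (h : ∀ i, (B i).IsEmbedding (B' i) (f i)) :
    (S.lex B).IsEmbedding (S.lex B') (Sigma.map id f) := by
  rintro b _ _ (⟨_, _, hxy⟩ | ⟨_, _, hxy⟩)
  · exact .left _ _ hxy
  · exact .right _ _ (h _ _ _ _ hxy)

/-- Isomorphism of pairs of orders. -/
def IsIsomorphic (A : BiOrder α) (B : BiOrder β) : Prop := ∃ e : α ≃ β, A.IsEmbedding B e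

namespace IsIsomorphic

theorem refl (A : BiOrder α) : A.IsIsomorphic A := ⟨Equiv.refl α, .id A⟩

theorem symm : A.IsIsomorphic B → B.IsIsomorphic A := fun ⟨e, h⟩ ↦ ⟨e.symm, h.symm⟩

theorem trans : A.IsIsomorphic B → B.IsIsomorphic C → A.IsIsomorphic C :=
  fun ⟨e, h⟩ ⟨e', h'⟩ ↦ ⟨e.trans e', h'.comp h⟩

theorem swap : A.IsIsomorphic B → A.swap.IsIsomorphic B.swap := fun ⟨e, h⟩ ↦ ⟨e, h.swap⟩

end IsIsomorphic

theorem IsEmbedding.isIsomorphic_restrict (h : A.IsEmbedding B f) {s : Set β}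
    (hs : Set.range f = s) : A.IsIsomorphic (B.restrict s) := by
  subst hs
  exact ⟨Equiv.ofInjective f h.injective, h⟩

theorem IsEmbedding.restrict_isIsomorphic_restrict {e : α ≃ β} (h : A.IsEmbedding B e)
    {s : Set α} {t : Set β} (hst : ∀ x, x ∈ s ↔ e x ∈ t) :
    (A.restrict s).IsIsomorphic (B.restrict t) :=
  ⟨e.subtypeEquiv hst, fun b x y ↦ h b x y⟩

theorem isIsomorphic_restrict_lex {α : κ → Type*} (S : BiOrder κ) (B : ∀ i, BiOrder (α i))
    (i : κ) : (B i).IsIsomorphic ((S.lex B).restrict {x | x.1 = i}) :=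
  (isEmbedding_sigma_mk S B i).isIsomorphic_restrict (Set.range_sigmaMk i)

/-- The map `q` presents `A` as an inflation of the image of `q` in `S`: elements in different
fibres of `q` are compared through `S`. -/
def IsProjection (A : BiOrder α) (S : BiOrder κ) (q : α → κ) : Prop :=
  ∀ b x y, A.r b x y → q x ≠ q y → S.r b (q x) (q y)

theorem IsEmbedding.isProjection (h : A.IsEmbedding B f) : A.IsProjection B f :=
  fun b x y hxy _ ↦ h b x y hxy

theorem isProjection_fst {α : κ → Type*} (S : BiOrder κ) (B : ∀ i, BiOrder (α i)) :
    (S.lex B).IsProjection S Sigma.fst := by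
  rintro b _ _ (⟨_, _, h⟩ | ⟨_, _, _⟩) hne
  · exact h
  · exact absurd rfl hne

namespace IsProjection

theorem r_iff (h : A.IsProjection S q) (hne : q x ≠ q y) : A.r b x y ↔ S.r b (q x) (q y) := by
  refine ⟨fun hxy ↦ h b x y hxy hne, fun hxy ↦ ?_⟩
  exact r_of_ne_of_not_r (ne_of_apply_ne q hne) fun hyx ↦
    asymm_of (S.r b) hxy (h b y x hyx hne.symm)

theorem comp_isEmbedding {q : β → κ} (h : B.IsProjection S q) (hf : A.IsEmbedding B f) :
    A.IsProjection S (q ∘ f) :=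
  fun b _ _ hxy hne ↦ h b _ _ (hf b _ _ hxy) hne

theorem isEmbedding_comp {g : κ → γ} (h : A.IsProjection S q) (hg : S.IsEmbedding C g) :
    A.IsProjection C (g ∘ q) :=
  fun b x y hxy hne ↦ hg b _ _ (h b x y hxy (ne_of_apply_ne g hne))

theorem isEmbedding_of_injective (h : A.IsProjection S q) (hq : q.Injective) :
    A.IsEmbedding S q :=
  fun b x y hxy ↦ h b x y hxy (hq.ne (ne_of_r hxy))

theorem swap (h : A.IsProjection S q) : A.swap.IsProjection S.swap q :=
  fun b x y hxy hne ↦ h (!b) x y hxy hne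

theorem isEmbedding_lex {α' : κ → Type*} {B : ∀ i, BiOrder (α' i)} {f : ∀ i, α' i → α}
    (h : A.IsProjection S q) (hf : ∀ i, (B i).IsEmbedding A (f i)) (hq : ∀ i y, q (f i y) = i) :
    (S.lex B).IsEmbedding A fun x ↦ f x.1 x.2 := by
  rintro b _ _ (⟨_, _, hxy⟩ | ⟨_, _, hxy⟩)
  · refine (h.r_iff ?_).2 ?_ <;> simp only [hq]
    exacts [ne_of_r hxy, hxy]
  · exact hf _ b _ _ hxy

theorem isIsomorphic_lex {α' : κ → Type*} {B : ∀ i, BiOrder (α' i)} (h : A.IsProjection S q)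
    (hB : ∀ i, (A.restrict {x | q x = i}).IsIsomorphic (B i)) : A.IsIsomorphic (S.lex B) := by
  choose e he using hB
  have hemb : (S.lex B).IsEmbedding A fun x ↦ ((e x.1).symm x.2 : α) :=
    h.isEmbedding_lex (fun i ↦ (isEmbedding_comap A _).comp (he i).symm)
      fun i y ↦ ((e i).symm y).2
  refine IsIsomorphic.symm ⟨.ofBijective _ ⟨hemb.injective, fun x ↦ ?_⟩, hemb⟩
  exact ⟨⟨q x, e (q x) ⟨x, rfl⟩⟩, by simp⟩

end IsProjection

end BiOrder

end BiOrders

/-- A permutation of unspecified length. -/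
abbrev SizedPerm := Σ n, Perm n

namespace SizedPerm

/-- The index order and the value order of a permutation. -/
def toBiOrder (p : SizedPerm) : BiOrder (Fin p.1) where
  r b x y := cond b (p.2 x < p.2 y) (x < y)
  isStrictTotalOrder := Bool.rec (inferInstanceAs (IsStrictTotalOrder _ (· < ·)))
    (RelEmbedding.preimage p.2.toEmbedding (· < ·)).isStrictTotalOrder

theorem eq_id_of_isEmbedding {p : SizedPerm} {f : Fin p.1 → Fin p.1}
    (h : p.toBiOrder.IsEmbedding p.toBiOrder f) : f = id :=
  StrictMono.eq_id fun x y ↦ h false x y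

theorem eq_of_isIsomorphic {p q : SizedPerm} (h : p.toBiOrder.IsIsomorphic q.toBiOrder) :
    p = q := by
  obtain ⟨m, σ⟩ := p
  obtain ⟨n, τ⟩ := q
  obtain ⟨e, he⟩ := h
  obtain rfl : m = n := by simpa using Fintype.card_congr e
  have hindex : ⇑e = id := StrictMono.eq_id fun x y ↦ he false x y
  have hvalue : τ ∘ e ∘ σ.symm = id := StrictMono.eq_id fun x y hxy ↦
    he true (σ.symm x) (σ.symm y) (show σ (σ.symm x) < σ (σ.symm y) by simpa using hxy)
  rw [hindex, Function.id_comp, Equiv.comp_symm_eq, Function.id_comp] at hvalue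
  rw [DFunLike.coe_injective hvalue]

theorem exists_isIsomorphic {α : Type*} [Finite α] (A : BiOrder α) :
    ∃ p : SizedPerm, p.toBiOrder.IsIsomorphic A := by
  classical
  have := Fintype.ofFinite α
  have key (b : Bool) : ∃ e : Fin (Nat.card α) ≃ α, ∀ x y, x < y → A.r b (e x) (e y) :=
    let := linearOrderOfSTO (A.r b)
    have e := Fintype.orderIsoFinOfCardEq α Nat.card_eq_fintype_card.symm
    ⟨e.toEquiv, fun _ _ h ↦ e.strictMono h⟩
  obtain ⟨e, he⟩ := key false
  obtain ⟨f, hf⟩ := key true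
  refine ⟨⟨Nat.card α, e.trans f.symm⟩, e, ?_⟩
  rintro (_ | _) x y hxy
  · exact he _ _ hxy
  · simpa using hf (f.symm (e x)) (f.symm (e y)) hxy

end SizedPerm

namespace BiOrder

variable {α β : Type*} [Finite α] {A : BiOrder α}

/-- The permutation isomorphic to a finite set with two orders. -/
noncomputable def toPerm (A : BiOrder α) : SizedPerm := (SizedPerm.exists_isIsomorphic A).choose

theorem toPerm_isIsomorphic (A : BiOrder α) : A.toPerm.toBiOrder.IsIsomorphic A :=
  (SizedPerm.exists_isIsomorphic A).choose_spec

theorem IsIsomorphic.toPerm_eq {p : SizedPerm} (h : A.IsIsomorphic p.toBiOrder) : A.toPerm = p :=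
  SizedPerm.eq_of_isIsomorphic (A.toPerm_isIsomorphic.trans h)

theorem IsIsomorphic.toPerm_eq_toPerm [Finite β] {B : BiOrder β} (h : A.IsIsomorphic B) :
    A.toPerm = B.toPerm :=
  (h.trans B.toPerm_isIsomorphic.symm).toPerm_eq

theorem toPerm_fst (A : BiOrder α) : A.toPerm.1 = Nat.card α := by
  obtain ⟨e, -⟩ := A.toPerm_isIsomorphic
  simpa using Nat.card_congr e

end BiOrder

namespace SizedPerm

/-- Containment of permutations. -/
def IsPatternOf (p q : SizedPerm) : Prop := ∃ f, p.toBiOrder.IsEmbedding q.toBiOrder f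

namespace IsPatternOf

variable {p q r : SizedPerm}

theorem refl (p : SizedPerm) : p.IsPatternOf p := ⟨id, .id _⟩

theorem trans : p.IsPatternOf q → q.IsPatternOf r → p.IsPatternOf r :=
  fun ⟨f, hf⟩ ⟨g, hg⟩ ↦ ⟨g ∘ f, hg.comp hf⟩

theorem contains : p.IsPatternOf q → Contains p.2 q.2 :=
  fun ⟨f, hf⟩ ↦ ⟨f, fun x y ↦ hf false x y, hf.r_iff true⟩

end IsPatternOf

instance : IsPreorder SizedPerm IsPatternOf where
  refl := .refl
  trans _ _ _ := .trans

theorem toPerm_isPatternOf {α : Type*} [Finite α] {A : BiOrder α} {q : SizedPerm}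
    {f : α → Fin q.1} (h : A.IsEmbedding q.toBiOrder f) : A.toPerm.IsPatternOf q := by
  obtain ⟨e, he⟩ := A.toPerm_isIsomorphic
  exact ⟨f ∘ e, h.comp he⟩

/-- The inverse permutation. -/
def inv (p : SizedPerm) : SizedPerm := ⟨p.1, p.2⁻¹⟩

theorem inv_inv (p : SizedPerm) : p.inv.inv = p :=
  Sigma.ext rfl (heq_of_eq (_root_.inv_inv p.2))

theorem isEmbedding_swap_inv (p : SizedPerm) :
    p.toBiOrder.swap.IsEmbedding p.inv.toBiOrder p.2 := by
  rintro (_ | _) x y h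
  · exact h
  · change p.2.symm (p.2 x) < p.2.symm (p.2 y)
    rwa [Equiv.symm_apply_apply, Equiv.symm_apply_apply]

theorem swap_isIsomorphic_inv (p : SizedPerm) :
    p.toBiOrder.swap.IsIsomorphic p.inv.toBiOrder :=
  ⟨p.2, p.isEmbedding_swap_inv⟩

theorem IsPatternOf.inv {p q : SizedPerm} (h : p.IsPatternOf q) : p.inv.IsPatternOf q.inv := by
  obtain ⟨f, hf⟩ := h
  exact ⟨_, q.isEmbedding_swap_inv.comp (hf.swap.comp p.isEmbedding_swap_inv.symm)⟩

theorem isPatternOf_inv_iff {p q : SizedPerm} : p.IsPatternOf q.inv ↔ p.inv.IsPatternOf q :=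
  ⟨fun h ↦ q.inv_inv ▸ h.inv, fun h ↦ p.inv_inv ▸ h.inv⟩

section Inflation

variable {k : ℕ} (s : Perm k) (a : Fin k → SizedPerm)

/-- The inflation of `s` by the permutations `a i`, indexed by the positions of `s`. -/
noncomputable def inflate : SizedPerm := ((toBiOrder ⟨k, s⟩).lex fun i ↦ (a i).toBiOrder).toPerm

theorem lex_isIsomorphic_inflate :
    ((toBiOrder ⟨k, s⟩).lex fun i ↦ (a i).toBiOrder).IsIsomorphic (inflate s a).toBiOrder :=
  (BiOrder.toPerm_isIsomorphic _).symm

theorem inflate_fst : (inflate s a).1 = ∑ i, (a i).1 := by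
  rw [inflate, BiOrder.toPerm_fst]
  simp

theorem exists_isProjection_inflate :
    ∃ q : Fin (inflate s a).1 → Fin k, (inflate s a).toBiOrder.IsProjection (toBiOrder ⟨k, s⟩) q ∧
      ∀ i, ((inflate s a).toBiOrder.restrict {x | q x = i}).IsIsomorphic (a i).toBiOrder := by
  obtain ⟨e, he⟩ := (lex_isIsomorphic_inflate s a).symm
  refine ⟨Sigma.fst ∘ e, (BiOrder.isProjection_fst _ _).comp_isEmbedding he, fun i ↦ ?_⟩
  exact .trans (he.restrict_isIsomorphic_restrict fun _ ↦ Iff.rfl)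
    (BiOrder.isIsomorphic_restrict_lex _ _ i).symm

theorem component_isPatternOf_inflate (i : Fin k) : (a i).IsPatternOf (inflate s a) := by
  obtain ⟨e, he⟩ := lex_isIsomorphic_inflate s a
  exact ⟨_, he.comp (BiOrder.isEmbedding_sigma_mk _ (fun i ↦ (a i).toBiOrder) i)⟩

variable {s a}

theorem isPatternOf_inflate (ha : ∀ i, 0 < (a i).1) : IsPatternOf ⟨k, s⟩ (inflate s a) := by
  obtain ⟨e, he⟩ := lex_isIsomorphic_inflate s a
  exact ⟨_, he.comp (BiOrder.isEmbedding_section _ _ fun i ↦ ⟨0, ha i⟩)⟩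

theorem inflate_isPatternOf_inflate {a' : Fin k → SizedPerm} (h : ∀ i, (a i).IsPatternOf (a' i)) :
    (inflate s a).IsPatternOf (inflate s a') := by
  choose f hf using h
  obtain ⟨e, he⟩ := (lex_isIsomorphic_inflate s a).symm
  obtain ⟨e', he'⟩ := lex_isIsomorphic_inflate s a'
  exact ⟨_, he'.comp ((BiOrder.isEmbedding_sigma_map _ hf).comp he)⟩

theorem toPerm_eq_inflate {α : Type*} [Finite α] {A : BiOrder α} {q : α → Fin k}
    (h : A.IsProjection (toBiOrder ⟨k, s⟩) q)
    (ha : ∀ i, (A.restrict {x | q x = i}).IsIsomorphic (a i).toBiOrder) : A.toPerm = inflate s a :=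
  (h.isIsomorphic_lex ha).toPerm_eq_toPerm

theorem eq_inflate {p : SizedPerm} {q : Fin p.1 → Fin k}
    (h : p.toBiOrder.IsProjection (toBiOrder ⟨k, s⟩) q)
    (ha : ∀ i, (p.toBiOrder.restrict {x | q x = i}).IsIsomorphic (a i).toBiOrder) :
    p = inflate s a :=
  (BiOrder.IsIsomorphic.refl _).toPerm_eq.symm.trans (toPerm_eq_inflate h ha)

variable (s a) in
theorem inv_inflate : (inflate s a).inv = inflate s⁻¹ fun i ↦ (a (s⁻¹ i)).inv := by
  obtain ⟨q, hq, hqa⟩ := exists_isProjection_inflate s a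
  rw [← (inflate s a).swap_isIsomorphic_inv.toPerm_eq]
  refine toPerm_eq_inflate (hq.swap.isEmbedding_comp (isEmbedding_swap_inv ⟨k, s⟩)) fun i ↦ ?_
  refine .trans ?_ ((hqa (s⁻¹ i)).swap.trans (a (s⁻¹ i)).swap_isIsomorphic_inv)
  exact BiOrder.IsEmbedding.restrict_isIsomorphic_restrict (e := .refl _) (.id _)
    fun x ↦ s.eq_symm_apply.symm

end Inflation

end SizedPerm

theorem exists_ne_and_ne {α β γ : Type*} {f : α → β} {g : α → γ} {u v w z : α} (hf : f u ≠ f v)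
    (hg : g w ≠ g z) : ∃ x y, f x ≠ f y ∧ g x ≠ g y := by
  by_contra! h
  by_cases hw : f w = f u
  · have huv := h u v hf
    have hwv := h w v (hw ▸ hf)
    have hzu : f z = f u := by_contra fun hz ↦ hg <| by
      rw [hwv, ← huv, h z u hz]
    exact hg (by rw [hwv, h z v (hzu ▸ hf)])
  · have hwu := h w u hw
    have hzw : f z = f w := by_contra fun hz ↦ hg (h z w hz).symm
    exact hg (by rw [hwu, h z u (hzw ▸ hw)])

namespace BiOrder

open SizedPerm (toBiOrder)

variable {α β κ κ' : Type*} {A : BiOrder α} {B : BiOrder β} {S : BiOrder κ} {T : BiOrder κ'}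
  {q : α → κ} {I J : Set α}

section Intervals

/-- The set `I` is an interval: no element outside `I` separates two elements of `I`. -/
def IsInterval (A : BiOrder α) (I : Set α) : Prop :=
  ∀ b, ∀ x ∉ I, ∀ y ∈ I, ∀ z ∈ I, A.r b x y → A.r b x z

theorem isInterval_singleton (A : BiOrder α) (x : α) : A.IsInterval {x} := by
  rintro b z - y rfl y' rfl h
  exact h

namespace IsInterval

theorem r_left {b : Bool} {x y z : α} (h : A.IsInterval I) (hx : x ∉ I) (hy : y ∈ I) (hz : z ∈ I)
    (hyx : A.r b y x) : A.r b z x :=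
  r_of_ne_of_not_r (ne_of_mem_of_not_mem hz hx) fun hxz ↦
    asymm_of (A.r b) hyx (h b x hx z hz y hy hxz)

theorem union (hI : A.IsInterval I) (hJ : A.IsInterval J) (h : (I ∩ J).Nonempty) :
    A.IsInterval (I ∪ J) := by
  obtain ⟨w, hwI, hwJ⟩ := h
  intro b x hx y hy z hz hxy
  rw [Set.mem_union, not_or] at hx
  have hxw : A.r b x w := hy.elim (fun hy ↦ hI b x hx.1 y hy w hwI hxy)
    fun hy ↦ hJ b x hx.2 y hy w hwJ hxy
  exact hz.elim (fun hz ↦ hI b x hx.1 w hwI z hz hxw) fun hz ↦ hJ b x hx.2 w hwJ z hz hxw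

theorem diff (hI : A.IsInterval I) (hJ : A.IsInterval J) (h : (J \ I).Nonempty) :
    A.IsInterval (I \ J) := by
  obtain ⟨w, hwJ, hwI⟩ := h
  intro b x hx y hy z hz hxy
  by_cases hxI : x ∈ I
  · have hxJ : x ∈ J := by_contra fun hn ↦ hx ⟨hxI, hn⟩
    exact hJ.r_left hz.2 hwJ hxJ (hI b w hwI y hy.1 z hz.1 (hJ.r_left hy.2 hxJ hwJ hxy))
  · exact hI b x hxI y hy.1 z hz.1 hxy

end IsInterval

namespace IsProjection

theorem isInterval_preimage {I : Set κ} (h : A.IsProjection S q) (hI : S.IsInterval I) :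
    A.IsInterval (q ⁻¹' I) := by
  intro b x hx y hy z hz hxy
  have hne (w) (hw : w ∈ q ⁻¹' I) : q x ≠ q w := fun h ↦ hx (h ▸ hw : q x ∈ I)
  exact (h.r_iff (hne z hz)).2 (hI b _ hx _ hy _ hz ((h.r_iff (hne y hy)).1 hxy))

theorem isInterval_image (h : A.IsProjection S q) (hq : q.Surjective) (hI : A.IsInterval I) :
    S.IsInterval (q '' I) := by
  rintro b c hc _ ⟨y, hy, rfl⟩ _ ⟨z, hz, rfl⟩ hxy
  obtain ⟨x, rfl⟩ := hq c
  have hne (w) (hw : w ∈ I) : q x ≠ q w := fun h' ↦ hc ⟨w, hw, h'.symm⟩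
  exact (h.r_iff (hne z hz)).1 (hI b _ (fun hx ↦ hc ⟨x, hx, rfl⟩) _ hy _ hz
    ((h.r_iff (hne y hy)).2 hxy))

theorem of_section {σ : κ → α} (hσ : Function.LeftInverse q σ)
    (h : ∀ c, A.IsInterval (q ⁻¹' {c})) : A.IsProjection (A.comap σ hσ.injective) q := by
  intro b x y hxy hne
  have hxy' : A.r b (σ (q x)) y := (h (q x)).r_left (Ne.symm hne) rfl (hσ _) hxy
  exact h (q y) b _ (fun hx ↦ hne ((hσ _).symm.trans hx)) _ rfl _ (hσ _) hxy'

end IsProjection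

/-- Simplicity: all intervals are trivial. -/
def IsSimple (A : BiOrder α) : Prop := ∀ I, A.IsInterval I → I.Subsingleton ∨ I = Set.univ

theorem IsSimple.of_isIsomorphic (hA : A.IsSimple) (h : A.IsIsomorphic B) : B.IsSimple := by
  obtain ⟨e, he⟩ := h
  intro I hI
  refine (hA _ (he.isProjection.isInterval_preimage hI)).imp (fun hsub ↦ ?_) fun huniv ↦ ?_
  · simpa using hsub.image e
  · rwa [Set.preimage_eq_univ_iff, e.range_eq_univ, Set.univ_subset_iff] at huniv

theorem isSimple_of_card_eq_two (h : Nat.card κ = 2) : S.IsSimple := by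
  intro I _
  have : Finite κ := Nat.finite_of_card_ne_zero (by omega)
  rcases le_or_gt I.ncard 1 with hI | hI
  · exact .inl (Set.ncard_le_one_iff_subsingleton.1 hI)
  · exact .inr (Set.eq_of_subset_of_ncard_le I.subset_univ (by rw [Set.ncard_univ]; omega))

theorem IsProjection.subsingleton_image (h : A.IsProjection S q) (hq : q.Surjective)
    (hS : S.IsSimple) (hκ : 3 ≤ Nat.card κ) (hI : A.IsInterval I) (hne : I ≠ Set.univ) :
    (q '' I).Subsingleton := by
  refine (hS _ (h.isInterval_image hq hI)).resolve_right fun huniv ↦ ?_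
  obtain ⟨x, hx⟩ := (Set.ne_univ_iff_exists_notMem I).1 hne
  have hmem (c) : ∃ y ∈ I, q y = c := (huniv.symm ▸ Set.mem_univ c : c ∈ q '' I)
  have hcompl : S.IsInterval {q x}ᶜ := by
    intro b c hc y hy z hz hcy
    obtain rfl : c = q x := by simpa using hc
    obtain ⟨y, hyI, rfl⟩ := hmem y
    obtain ⟨z, hzI, rfl⟩ := hmem z
    exact (h.r_iff (Ne.symm hz)).1 (hI b x hx y hyI z hzI ((h.r_iff (Ne.symm hy)).2 hcy))
  rcases hS _ hcompl with hsub | huniv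
  · have : Finite κ := Nat.finite_of_card_ne_zero (by omega)
    have hcard := Set.ncard_add_ncard_compl {q x}
    have := Set.ncard_le_one_iff_subsingleton.2 hsub
    rw [Set.ncard_singleton] at hcard
    omega
  · exact (huniv.symm ▸ Set.mem_univ (q x) : q x ∈ ({q x}ᶜ : Set κ)) rfl

end Intervals

section Decomposition

/-- `A` is an inflation of `S` by nonempty blocks. -/
def IsInflationOf (A : BiOrder α) (S : BiOrder κ) : Prop :=
  ∃ q : α → κ, q.Surjective ∧ A.IsProjection S q

namespace IsInflationOf

theorem congr_left (h : A.IsInflationOf S) (e : A.IsIsomorphic B) : B.IsInflationOf S := by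
  obtain ⟨q, hq, hp⟩ := h
  obtain ⟨e, he⟩ := e
  exact ⟨q ∘ e.symm, hq.comp e.symm.surjective, hp.comp_isEmbedding he.symm⟩

theorem congr_right (h : A.IsInflationOf S) (e : S.IsIsomorphic T) : A.IsInflationOf T := by
  obtain ⟨q, hq, hp⟩ := h
  obtain ⟨e, he⟩ := e
  exact ⟨e ∘ q, e.surjective.comp hq, hp.isEmbedding_comp he⟩

end IsInflationOf

/-- The permutation `s` and the block map `q` form the canonical presentation of `A` as the
inflation of a simple permutation. If `s` has length two, then `q` is made unique by requiring that
the first block is not itself an inflation of `s`. -/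
structure IsCanonicalProjection {k : ℕ} (s : Perm k) (A : BiOrder α) (q : α → Fin k) : Prop where
  two_le : 2 ≤ k
  isSimple : (toBiOrder ⟨k, s⟩).IsSimple
  surjective : q.Surjective
  isProjection : A.IsProjection (toBiOrder ⟨k, s⟩) q
  not_isInflationOf : ∀ i : Fin k, k = 2 → i.val = 0 →
    ¬(A.restrict {x | q x = i}).IsInflationOf (toBiOrder ⟨k, s⟩)

theorem exists_isInflationOf_of_compl (hI : A.IsInterval I) (hI' : A.IsInterval Iᶜ)
    (hne : I.Nonempty) (hne' : I ≠ Set.univ) :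
    ∃ τ : Perm 2, A.IsInflationOf (toBiOrder ⟨2, τ⟩) := by
  classical
  obtain ⟨x, hx⟩ := hne
  obtain ⟨y, hy⟩ := (Set.ne_univ_iff_exists_notMem I).1 hne'
  let q (z : α) : Fin 2 := if z ∈ I then 0 else 1
  have hq0 : q ⁻¹' {0} = I := by ext z; by_cases hz : z ∈ I <;> simp [q, hz]
  have hq1 : q ⁻¹' {1} = Iᶜ := by ext z; by_cases hz : z ∈ I <;> simp [q, hz]
  have hσ : Function.LeftInverse q ![x, y] :=
    Fin.forall_fin_two.2 ⟨by simp [q, hx], by simp [q, hy]⟩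
  have hq := IsProjection.of_section hσ (Fin.forall_fin_two.2 ⟨hq0 ▸ hI, hq1 ▸ hI'⟩)
  obtain ⟨⟨k, τ⟩, hτ⟩ := SizedPerm.exists_isIsomorphic (A.comap _ hσ.injective)
  obtain rfl : k = 2 := by simpa using Nat.card_congr hτ.choose
  exact ⟨τ, IsInflationOf.congr_right ⟨q, hσ.surjective, hq⟩ hτ.symm⟩

/-- This is the associativity `τ[τ[a, b], c] = τ[a, τ[b, c]]`: the first block shrinks. -/
theorem IsProjection.exists_zero_fiber_ssubset {τ : Perm 2} {q : α → Fin 2}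
    (hp : A.IsProjection (toBiOrder ⟨2, τ⟩) q)
    (h : (A.restrict {x | q x = 0}).IsInflationOf (toBiOrder ⟨2, τ⟩)) :
    ∃ r : α → Fin 2, r.Surjective ∧ A.IsProjection (toBiOrder ⟨2, τ⟩) r ∧
      {x | r x = 0} ⊂ {x | q x = 0} := by
  obtain ⟨q', hq', hp'⟩ := h
  let r (x : α) : Fin 2 := if h : q x = 0 then q' ⟨x, h⟩ else 1
  have hr0 {x} (h : q x = 0) : r x = q' ⟨x, h⟩ := dif_pos h
  have hr1 {x} (h : q x ≠ 0) : r x = 1 := dif_neg h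
  have hr_ne {x y} (hx : q x ≠ 0) (hne : r x ≠ r y) : r y = 0 :=
    by_contra fun hy ↦ hne ((hr1 hx).trans (Fin.eq_one_of_ne_zero _ hy).symm)
  have hsub {x} (h : r x = 0) : q x = 0 := by_contra fun hx ↦ zero_ne_one (h.symm.trans (hr1 hx))
  have hqr {x} (h : q x ≠ 0 ∨ r x = 0) : q x = r x :=
    h.elim (fun h ↦ (Fin.eq_one_of_ne_zero _ h).trans (hr1 h).symm) fun h ↦ (hsub h).trans h.symm
  obtain ⟨⟨x₀, hx₀⟩, hx₀'⟩ := hq' 0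
  obtain ⟨⟨x₁, hx₁⟩, hx₁'⟩ := hq' 1
  have hsurj : r.Surjective :=
    Fin.forall_fin_two.2 ⟨⟨x₀, (hr0 hx₀).trans hx₀'⟩, ⟨x₁, (hr0 hx₁).trans hx₁'⟩⟩
  refine ⟨r, hsurj, fun b x y hxy hne ↦ ?_, fun _ ↦ hsub, fun h ↦ ?_⟩
  · by_cases h0 : q x = 0 ∧ q y = 0
    · rw [hr0 h0.1, hr0 h0.2] at hne ⊢
      exact hp' b _ _ hxy hne
    · have hqr' : q x = r x ∧ q y = r y := by
        rcases not_and_or.1 h0 with hx | hy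
        · exact ⟨hqr (.inl hx), hqr (.inr (hr_ne hx hne))⟩
        · exact ⟨hqr (.inr (hr_ne hy hne.symm)), hqr (.inl hy)⟩
      rw [← hqr'.1, ← hqr'.2] at hne ⊢
      exact hp b x y hxy hne
  · exact zero_ne_one ((h hx₁).symm.trans ((hr0 hx₁).trans hx₁'))

theorem IsInflationOf.exists_isCanonicalProjection [Finite α] {τ : Perm 2}
    (h : A.IsInflationOf (toBiOrder ⟨2, τ⟩)) : ∃ q, IsCanonicalProjection τ A q := by
  obtain ⟨q, ⟨hq, hp⟩, hmin⟩ := exists_minimalFor_of_wellFoundedLT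
    (fun q : α → Fin 2 ↦ q.Surjective ∧ A.IsProjection (toBiOrder ⟨2, τ⟩) q)
    (fun q ↦ {x | q x = 0}) h
  refine ⟨q, le_rfl, isSimple_of_card_eq_two (by simp), hq, hp, ?_⟩
  rintro i - hi hinfl
  obtain rfl : i = 0 := Fin.ext hi
  obtain ⟨r, hr, hp', hlt⟩ := hp.exists_zero_fiber_ssubset hinfl
  exact hlt.not_ge (hmin ⟨hr, hp'⟩ hlt.le)

theorem IsInterval.union_ne_univ (hA : ∀ τ : Perm 2, ¬A.IsInflationOf (toBiOrder ⟨2, τ⟩))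
    (hI : A.IsInterval I) (hJ : A.IsInterval J) (hI' : I ≠ Set.univ) (hJ' : J ≠ Set.univ)
    (hIJ : (I ∩ J).Nonempty) : I ∪ J ≠ Set.univ := by
  intro h
  have hJI : I \ J = Jᶜ := by
    rw [← Set.union_sdiff_right, h, Set.compl_eq_univ_sdiff]
  have hne : (J \ I).Nonempty := by
    rw [← Set.union_sdiff_left, h, ← Set.compl_eq_univ_sdiff, Set.nonempty_compl]
    exact hI'
  obtain ⟨τ, hτ⟩ := exists_isInflationOf_of_compl hJ (hJI ▸ hI.diff hJ hne)
    (hIJ.mono Set.inter_subset_right) hJ'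
  exact hA τ hτ

section ProperIntervalSetoid

variable (hA : ∀ τ : Perm 2, ¬A.IsInflationOf (toBiOrder ⟨2, τ⟩))

/-- Two elements are equivalent if they lie in a common proper interval; the classes are the
maximal proper intervals. -/
def properIntervalSetoid [Nontrivial α] : Setoid α where
  r x y := ∃ I, (A.IsInterval I ∧ I ≠ Set.univ) ∧ x ∈ I ∧ y ∈ I
  iseqv :=
    { refl x := ⟨{x}, ⟨A.isInterval_singleton x, Set.singleton_ne_univ x⟩, rfl, rfl⟩
      symm := fun ⟨I, hI, hx, hy⟩ ↦ ⟨I, hI, hy, hx⟩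
      trans := fun ⟨I, hI, hx, hy⟩ ⟨J, hJ, hy', hz⟩ ↦
        ⟨I ∪ J, ⟨hI.1.union hJ.1 ⟨_, hy, hy'⟩,
          hI.1.union_ne_univ hA hJ.1 hI.2 hJ.2 ⟨_, hy, hy'⟩⟩, .inl hx, .inr hz⟩ }

theorem isInterval_properIntervalSetoid [Nontrivial α] (x : α) :
    A.IsInterval {y | properIntervalSetoid hA y x} := by
  rintro b z hz y ⟨I, hI, hyI, hxI⟩ y' ⟨J, hJ, hyJ, hxJ⟩ hzy
  exact hJ.1 b z (fun h ↦ hz ⟨J, hJ, h, hxJ⟩) x hxJ y' hyJ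
    (hI.1 b z (fun h ↦ hz ⟨I, hI, h, hxI⟩) y hyI x hxI hzy)

theorem exists_not_properIntervalSetoid [Finite α] [Nontrivial α] (x : α) :
    ∃ y, ¬properIntervalSetoid hA x y := by
  obtain ⟨I, ⟨hI, hx⟩, hmax⟩ := exists_maximal_of_wellFoundedGT
    (fun I : Set α ↦ (A.IsInterval I ∧ I ≠ Set.univ) ∧ x ∈ I)
    ⟨{x}, ⟨A.isInterval_singleton x, Set.singleton_ne_univ x⟩, rfl⟩
  obtain ⟨y, hy⟩ := (Set.ne_univ_iff_exists_notMem I).1 hI.2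
  refine ⟨y, fun ⟨J, hJ, hxJ, hyJ⟩ ↦ hy (hmax ⟨⟨hI.1.union hJ.1 ⟨x, hx, hxJ⟩, ?_⟩, .inl hx⟩
    Set.subset_union_left (.inr hyJ))⟩
  exact hI.1.union_ne_univ hA hJ.1 hI.2 hJ.2 ⟨x, hx, hxJ⟩

end ProperIntervalSetoid

theorem exists_isProjection_isSimple [Finite α] [Nontrivial α]
    (hA : ∀ τ : Perm 2, ¬A.IsInflationOf (toBiOrder ⟨2, τ⟩)) :
    ∃ (k : ℕ) (s : Perm k) (q : α → Fin k), 2 ≤ k ∧ (toBiOrder ⟨k, s⟩).IsSimple ∧ q.Surjective ∧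
      A.IsProjection (toBiOrder ⟨k, s⟩) q := by
  let c := properIntervalSetoid hA
  let S : BiOrder (Quotient c) := A.comap Quotient.out Quotient.out_injective
  have hproj : A.IsProjection S (Quotient.mk c) := .of_section Quotient.out_eq fun t ↦ by
    obtain ⟨x, rfl⟩ := Quotient.exists_rep t
    convert isInterval_properIntervalSetoid hA x using 1
    exact Set.ext fun y ↦ Quotient.eq
  have hsimple : S.IsSimple := by
    intro I hI
    refine or_iff_not_imp_right.2 fun hne ↦ ?_
    rintro ⟨x⟩ hx ⟨y⟩ hy
    refine Quotient.sound ⟨_, ⟨hproj.isInterval_preimage hI, fun h ↦ hne ?_⟩, hx, hy⟩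
    exact Set.eq_univ_of_forall (Quotient.mk_surjective.forall.2 (Set.eq_univ_iff_forall.1 h))
  obtain ⟨⟨k, s⟩, hs⟩ := SizedPerm.exists_isIsomorphic S
  obtain ⟨q, hq, hp⟩ := IsInflationOf.congr_right ⟨_, Quotient.mk_surjective, hproj⟩ hs.symm
  refine ⟨k, s, q, ?_, hsimple.of_isIsomorphic hs.symm, hq, hp⟩
  have hnontrivial : Nontrivial (Quotient c) := by
    obtain ⟨x⟩ := (inferInstance : Nonempty α)
    obtain ⟨y, hy⟩ := exists_not_properIntervalSetoid hA x
    exact ⟨⟦x⟧, ⟦y⟧, fun h ↦ hy (Quotient.exact h)⟩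
  exact Fin.nontrivial_iff_two_le.1 hs.choose.nontrivial

theorem exists_isCanonicalProjection [Finite α] [Nontrivial α] (A : BiOrder α) :
    ∃ (k : ℕ) (s : Perm k) (q : α → Fin k), IsCanonicalProjection s A q := by
  by_cases! hA : ∃ τ : Perm 2, A.IsInflationOf (toBiOrder ⟨2, τ⟩)
  · obtain ⟨τ, hτ⟩ := hA
    exact ⟨2, τ, hτ.exists_isCanonicalProjection⟩
  · obtain ⟨k, s, q, hk, hs, hq, hp⟩ := exists_isProjection_isSimple hA
    refine ⟨k, s, q, hk, hs, hq, hp, ?_⟩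
    rintro - rfl -
    exact absurd ⟨q, hq, hp⟩ (hA s)

theorem IsProjection.fiber_ne_univ [Nontrivial κ] (hq : q.Surjective) (c : κ) :
    q ⁻¹' {c} ≠ Set.univ := by
  obtain ⟨d, hd⟩ := exists_ne c
  obtain ⟨x, rfl⟩ := hq d
  exact fun h ↦ hd (h ▸ Set.mem_univ x : x ∈ q ⁻¹' {c})

theorem IsProjection.eq_of_isProjection_two {s τ : Perm 2} {q q' : α → Fin 2}
    (hp : A.IsProjection (toBiOrder ⟨2, s⟩) q) (hq : q.Surjective)
    (hp' : A.IsProjection (toBiOrder ⟨2, τ⟩) q') (hq' : q'.Surjective) : s = τ := by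
  obtain ⟨u, hu⟩ := hq 0
  obtain ⟨v, hv⟩ := hq 1
  obtain ⟨w, hw⟩ := hq' 0
  obtain ⟨z, hz⟩ := hq' 1
  obtain ⟨x, y, hne, hne'⟩ := exists_ne_and_ne (f := q) (g := q') (u := u) (v := v) (w := w)
    (z := z) (by simp [hu, hv]) (by simp [hw, hz])
  have hpos : q x < q y ↔ q' x < q' y :=
    (hp.r_iff (b := false) hne).symm.trans (hp'.r_iff (b := false) hne')
  have hval : s (q x) < s (q y) ↔ τ (q' x) < τ (q' y) :=
    (hp.r_iff (b := true) hne).symm.trans (hp'.r_iff (b := true) hne')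
  have hdecide : ∀ (s τ : Perm 2) (a b c d : Fin 2), a ≠ b → c ≠ d → (a < b ↔ c < d) →
      (s a < s b ↔ τ c < τ d) → s = τ := by decide
  exact hdecide s τ _ _ _ _ hne hne' hpos hval

namespace IsCanonicalProjection

variable {k k' : ℕ} {s : Perm k} {s' : Perm k'} {q : α → Fin k} {q' : α → Fin k'}

theorem eq_of_eq [Nontrivial κ] (h : IsCanonicalProjection s A q) (hk : 3 ≤ k) {p : α → κ}
    (hp : A.IsProjection S p) (hsurj : p.Surjective) {x y : α} (hxy : p x = p y) : q x = q y :=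
  h.isProjection.subsingleton_image h.surjective h.isSimple (by simpa using hk)
    (hp.isInterval_preimage (S.isInterval_singleton (p y)))
    (IsProjection.fiber_ne_univ hsurj _) ⟨x, hxy, rfl⟩ ⟨y, rfl, rfl⟩

theorem not_isInflationOf_of_three_le (h : IsCanonicalProjection s A q) (hk : 3 ≤ k) (τ : Perm 2) :
    ¬A.IsInflationOf (toBiOrder ⟨2, τ⟩) := by
  rintro ⟨p, hp, hproj⟩
  have hle : k ≤ 2 := by
    have hinj : (q ∘ Function.surjInv hp).Surjective := fun c ↦ by
      obtain ⟨x, rfl⟩ := h.surjective c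
      exact ⟨p x, h.eq_of_eq hk hproj hp (Function.surjInv_eq hp _)⟩
    simpa using Fintype.card_le_of_surjective _ hinj
  omega

theorem isInflationOf_iff (h : IsCanonicalProjection s A q) {τ : Perm 2} :
    A.IsInflationOf (toBiOrder ⟨2, τ⟩) ↔ (⟨k, s⟩ : SizedPerm) = ⟨2, τ⟩ := by
  refine ⟨fun hτ ↦ ?_, fun h' ↦ h' ▸ ⟨q, h.surjective, h.isProjection⟩⟩
  rcases h.two_le.lt_or_eq with hk | rfl
  · exact absurd hτ (h.not_isInflationOf_of_three_le hk τ)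
  · obtain ⟨p, hp, hproj⟩ := hτ
    rw [h.isProjection.eq_of_isProjection_two h.surjective hproj hp]

theorem eq_of_forall_eq_iff (h : IsCanonicalProjection s A q) (h' : IsCanonicalProjection s' A q')
    (hker : ∀ x y, q x = q y ↔ q' x = q' y) :
    (⟨k, s, q⟩ : Σ k, Perm k × (α → Fin k)) = ⟨k', s', q'⟩ := by
  let g := Function.surjInv h.surjective
  have hg (x) : q' (g (q x)) = q' x := (hker _ _).1 (Function.surjInv_eq _ _)
  have hemb : (toBiOrder ⟨k, s⟩).IsEmbedding (toBiOrder ⟨k', s'⟩) (q' ∘ g) := by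
    intro b c d hcd
    obtain ⟨x, rfl⟩ := h.surjective c
    obtain ⟨y, rfl⟩ := h.surjective d
    have hne := ne_of_r hcd
    rw [Function.comp_apply, Function.comp_apply, hg, hg]
    exact (h'.isProjection.r_iff ((hker x y).not.1 hne)).1 ((h.isProjection.r_iff hne).2 hcd)
  have hsurj : (q' ∘ g).Surjective := fun c ↦ by
    obtain ⟨x, rfl⟩ := h'.surjective c
    exact ⟨q x, hg x⟩
  obtain ⟨rfl, hs⟩ := Sigma.mk.inj_iff.1
    (SizedPerm.eq_of_isIsomorphic ⟨Equiv.ofBijective (q' ∘ g) ⟨hemb.injective, hsurj⟩, hemb⟩)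
  obtain rfl := eq_of_heq hs
  have hq : q = q' := funext fun x ↦ by
    rw [← hg, ← Function.comp_apply (f := q'), SizedPerm.eq_id_of_isEmbedding hemb, id]
  rw [hq]

theorem apply_eq_zero {s : Perm 2} {q q' : α → Fin 2} (h : IsCanonicalProjection s A q)
    (h' : IsCanonicalProjection s A q') {x : α} (hx : q x = 0) : q' x = 0 := by
  by_contra hx'
  refine h.not_isInflationOf 0 rfl rfl ⟨fun y ↦ q' y, Fin.forall_fin_two.2
    ⟨?_, ⟨x, hx⟩, Fin.eq_one_of_ne_zero _ hx'⟩,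
    h'.isProjection.comp_isEmbedding (A.isEmbedding_comap Subtype.val_injective)⟩
  obtain ⟨y, hy⟩ := h'.surjective 0
  refine ⟨⟨y, by_contra fun hy' ↦ ?_⟩, hy⟩
  have hxy : A.r false x y := (h.isProjection.r_iff (hx ▸ Ne.symm hy')).2
    (show q x < q y from hx ▸ Fin.pos_of_ne_zero hy')
  have hyx : A.r false y x := (h'.isProjection.r_iff (hy ▸ Ne.symm hx')).2
    (show q' y < q' x from hy ▸ Fin.pos_of_ne_zero hx')
  exact asymm_of (A.r false) hxy hyx

theorem three_le_of_ne (h : IsCanonicalProjection s A q) (h' : IsCanonicalProjection s' A q')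
    (hs : (⟨k, s⟩ : SizedPerm) ≠ ⟨k', s'⟩) : 3 ≤ k := by
  rcases h.two_le.lt_or_eq with hk | rfl
  · exact hk
  · exact absurd (h'.isInflationOf_iff.1 ⟨q, h.surjective, h.isProjection⟩).symm hs

theorem unique (h : IsCanonicalProjection s A q) (h' : IsCanonicalProjection s' A q') :
    (⟨k, s, q⟩ : Σ k, Perm k × (α → Fin k)) = ⟨k', s', q'⟩ := by
  have := Fin.nontrivial_iff_two_le.2 h.two_le
  have := Fin.nontrivial_iff_two_le.2 h'.two_le
  have of_three_le (hk : 3 ≤ k) (hk' : 3 ≤ k') :=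
    h.eq_of_forall_eq_iff h' fun x y ↦ ⟨h'.eq_of_eq hk' h.isProjection h.surjective,
      h.eq_of_eq hk h'.isProjection h'.surjective⟩
  by_cases hs : (⟨k, s⟩ : SizedPerm) = ⟨k', s'⟩
  · obtain ⟨rfl, hs⟩ := Sigma.mk.inj_iff.1 hs
    obtain rfl := eq_of_heq hs
    rcases h.two_le.lt_or_eq with hk | rfl
    · exact of_three_le hk hk
    · have hq : q = q' := funext fun x ↦
        Fin.fin_two_eq_of_eq_zero_iff ⟨h.apply_eq_zero h', h'.apply_eq_zero h⟩
      rw [hq]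
  · exact of_three_le (h.three_le_of_ne h' hs) (h'.three_le_of_ne h (Ne.symm hs))

end IsCanonicalProjection

end Decomposition

end BiOrder

namespace SizedPerm

section CanonicalInflation

theorem exists_surjective_isProjection_inflate {k : ℕ} (s : Perm k) {a : Fin k → SizedPerm}
    (ha : ∀ i, 0 < (a i).1) :
    ∃ q : Fin (inflate s a).1 → Fin k, q.Surjective ∧
      (inflate s a).toBiOrder.IsProjection (toBiOrder ⟨k, s⟩) q ∧
      ∀ i, ((inflate s a).toBiOrder.restrict {x | q x = i}).IsIsomorphic (a i).toBiOrder := by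
  obtain ⟨q, hq, hi⟩ := exists_isProjection_inflate s a
  refine ⟨q, fun i ↦ ?_, hq, hi⟩
  obtain ⟨e, -⟩ := hi i
  exact ⟨_, (e.symm ⟨0, ha i⟩).2⟩

/-- The presentation `inflate s a` is canonical: `s` is simple and the components are nonempty. If
`s` has length two, then the presentation is made unique by requiring that the first component is
not itself an inflation of `s`. -/
structure IsCanonicalInflation {k : ℕ} (s : Perm k) (a : Fin k → SizedPerm) : Prop where
  two_le : 2 ≤ k
  isSimple : (toBiOrder ⟨k, s⟩).IsSimple
  pos : ∀ i, 0 < (a i).1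
  not_isInflationOf : ∀ i : Fin k, k = 2 → i.val = 0 →
    ¬(a i).toBiOrder.IsInflationOf (toBiOrder ⟨k, s⟩)

theorem exists_isCanonicalInflation (p : SizedPerm) (hp : 2 ≤ p.1) :
    ∃ (k : ℕ) (s : Perm k) (a : Fin k → SizedPerm), IsCanonicalInflation s a ∧ inflate s a = p := by
  have := Fin.nontrivial_iff_two_le.2 hp
  obtain ⟨k, s, q, hq⟩ := p.toBiOrder.exists_isCanonicalProjection
  refine ⟨k, s, fun i ↦ (p.toBiOrder.restrict {x | q x = i}).toPerm,
    ⟨hq.two_le, hq.isSimple, fun i ↦ ?_, fun i hk hi hd ↦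
      hq.not_isInflationOf i hk hi (hd.congr_left (BiOrder.toPerm_isIsomorphic _))⟩,
    (eq_inflate hq.isProjection fun i ↦ (BiOrder.toPerm_isIsomorphic _).symm).symm⟩
  obtain ⟨x, hx⟩ := hq.surjective i
  rw [BiOrder.toPerm_fst]
  exact Nat.card_pos_iff.2 ⟨⟨⟨x, hx⟩⟩, inferInstance⟩

namespace IsCanonicalInflation

variable {k k' : ℕ} {s : Perm k} {s' : Perm k'} {a : Fin k → SizedPerm} {a' : Fin k' → SizedPerm}

theorem exists_isCanonicalProjection (h : IsCanonicalInflation s a) :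
    ∃ q, BiOrder.IsCanonicalProjection s (inflate s a).toBiOrder q ∧
      ∀ i, ((inflate s a).toBiOrder.restrict {x | q x = i}).IsIsomorphic (a i).toBiOrder := by
  obtain ⟨q, hsurj, hq, hi⟩ := exists_surjective_isProjection_inflate s h.pos
  exact ⟨q, ⟨h.two_le, h.isSimple, hsurj, hq, fun i hk hi0 hd ↦
    h.not_isInflationOf i hk hi0 (hd.congr_left (hi i))⟩, hi⟩

theorem unique (h : IsCanonicalInflation s a) (h' : IsCanonicalInflation s' a')
    (heq : inflate s a = inflate s' a') :
    (⟨k, s, a⟩ : Σ k, Perm k × (Fin k → SizedPerm)) = ⟨k', s', a'⟩ := by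
  obtain ⟨q, hq, hi⟩ := h.exists_isCanonicalProjection
  obtain ⟨q', hq', hi'⟩ := h'.exists_isCanonicalProjection
  generalize inflate s a = p at *
  subst heq
  obtain ⟨rfl, hsq⟩ := Sigma.mk.inj_iff.1 (hq.unique hq')
  obtain ⟨rfl, rfl⟩ := Prod.mk_inj.1 (eq_of_heq hsq)
  rw [funext fun i ↦ eq_of_isIsomorphic ((hi i).symm.trans (hi' i))]

theorem isInflationOf_iff (h : IsCanonicalInflation s a) {τ : Perm 2} :
    (inflate s a).toBiOrder.IsInflationOf (toBiOrder ⟨2, τ⟩) ↔ (⟨k, s⟩ : SizedPerm) = ⟨2, τ⟩ := by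
  obtain ⟨q, hq, -⟩ := h.exists_isCanonicalProjection
  exact hq.isInflationOf_iff

theorem size_lt (h : IsCanonicalInflation s a) (i : Fin k) : (a i).1 < (inflate s a).1 := by
  rw [inflate_fst]
  have : Nontrivial (Fin k) := Fin.nontrivial_iff_two_le.2 h.two_le
  obtain ⟨j, hj⟩ := exists_ne i
  exact Finset.single_lt_sum (f := fun i ↦ (a i).1) hj (Finset.mem_univ _) (Finset.mem_univ _)
    (h.pos j) fun _ _ _ ↦ Nat.zero_le _

theorem two_le_size (h : IsCanonicalInflation s a) : 2 ≤ (inflate s a).1 :=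
  lt_of_le_of_lt (h.pos ⟨0, two_pos.trans_le h.two_le⟩) (h.size_lt _)

end IsCanonicalInflation

theorem isSimple_of_isSimple_toBiOrder {p : SizedPerm} (h : p.toBiOrder.IsSimple) :
    IsSimple p.2 := by
  intro I hI
  have hint : p.toBiOrder.IsInterval I := by
    rintro (_ | _) x hx y hy z hz hxy <;> by_contra hn
    · exact hx (hI.1 hz hy (not_lt.1 hn) (le_of_lt hxy))
    · refine hx ((Function.Injective.mem_finset_image p.2.injective).1 ?_)
      exact hI.2 (Finset.mem_image_of_mem _ hz) (Finset.mem_image_of_mem _ hy) (not_lt.1 hn)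
        (le_of_lt hxy)
  refine (h _ hint).imp Finset.card_le_one_iff_subsingleton.2 fun huniv ↦ ?_
  rw [Finset.coe_eq_univ.1 huniv, Finset.card_univ, Fintype.card_fin]

end CanonicalInflation

section WellQuasiOrder

/-- `D` is a permutation class (as a set of sized permutations) with finitely many simple
members. -/
structure IsFinSimpleClass (D : Set SizedPerm) : Prop where
  of_isPatternOf : ∀ {p q : SizedPerm}, p.IsPatternOf q → q ∈ D → p ∈ D
  finite_isSimple : {p ∈ D | p.toBiOrder.IsSimple}.Finite

/-- The wreath closure of `D`: the permutations all of whose simple patterns lie in `D`. -/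
def wreathClosure (D : Set SizedPerm) : Set SizedPerm :=
  {p | ∀ σ : SizedPerm, σ.toBiOrder.IsSimple → σ.IsPatternOf p → σ ∈ D}

variable {D : Set SizedPerm}

theorem IsPatternOf.mem_wreathClosure {p q : SizedPerm} (h : p.IsPatternOf q)
    (hq : q ∈ wreathClosure D) : p ∈ wreathClosure D := fun σ hσ hs ↦ hq σ hσ (hs.trans h)

/-- The patterns of the terms of a sequence that are strictly shorter than that term. -/
def properPatterns (f : ℕ → SizedPerm) : Set SizedPerm :=
  {a | ∃ n, a.IsPatternOf (f n) ∧ a.1 < (f n).1}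

/-- Nash-Williams' minimal bad sequence argument: a bad sequence of proper patterns could be
spliced into `f`, making it smaller. -/
theorem partiallyWellOrderedOn_properPatterns {W : Set SizedPerm} {f : ℕ → SizedPerm}
    (hW : ∀ {p q : SizedPerm}, p.IsPatternOf q → q ∈ W → p ∈ W)
    (hf : Set.PartiallyWellOrderedOn.IsBadSeq IsPatternOf W f)
    (hmin : ∀ n, Set.PartiallyWellOrderedOn.IsMinBadSeq IsPatternOf Sigma.fst W n f) :
    (properPatterns f).PartiallyWellOrderedOn IsPatternOf := by
  rw [Set.partiallyWellOrderedOn_iff_exists_lt]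
  by_contra! ⟨g, hg, hgbad⟩
  choose φ hφ hφ' using hg
  obtain ⟨i₀, -, hi₀⟩ := exists_minimalFor_of_wellFoundedLT (fun _ : ℕ ↦ True) φ ⟨0, trivial⟩
  have hle (i) : φ i₀ ≤ φ i := (le_total _ _).elim id (hi₀ trivial)
  let splice (m : ℕ) : SizedPerm := if m < φ i₀ then f m else g (i₀ + (m - φ i₀))
  have hsplice : Set.PartiallyWellOrderedOn.IsBadSeq IsPatternOf W splice := by
    refine ⟨fun n ↦ ?_, fun m n hmn h ↦ ?_⟩
    · dsimp only [splice]
      split_ifs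
      · exact hf.1 n
      · exact hW (hφ _) (hf.1 _)
    · dsimp only [splice] at h
      split_ifs at h with hm hn hn
      · exact hf.2 m n hmn h
      · exact hf.2 m _ (hm.trans_le (hle _)) (h.trans (hφ _))
      · omega
      · exact hgbad _ _ (by omega) h
  exact hmin (φ i₀) splice (fun m hm ↦ (if_pos hm).symm) (by simpa [splice] using hφ' i₀) hsplice

theorem finite_size_le (N : ℕ) : {p : SizedPerm | p.1 ≤ N}.Finite := by
  refine (Set.finite_range fun p : Σ n : Fin (N + 1), Perm n ↦ (⟨p.1, p.2⟩ : SizedPerm)).subset ?_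
  rintro ⟨n, σ⟩ hn
  exact ⟨⟨⟨n, Nat.lt_succ_of_le hn⟩, σ⟩, rfl⟩

namespace IsFinSimpleClass

theorem subset_wreathClosure (hD : IsFinSimpleClass D) : D ⊆ wreathClosure D :=
  fun _ hp _ _ hσ ↦ hD.of_isPatternOf hσ hp

theorem inflate_mem_wreathClosure (hD : IsFinSimpleClass D) {k : ℕ} {s : Perm k}
    {a : Fin k → SizedPerm} (hs : (⟨k, s⟩ : SizedPerm) ∈ D) (ha : ∀ i, a i ∈ wreathClosure D) :
    inflate s a ∈ wreathClosure D := by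
  rintro σ hσ ⟨f, hf⟩
  obtain ⟨q, hq, hi⟩ := exists_isProjection_inflate s a
  have hp := hq.comp_isEmbedding hf
  by_cases! h : ∃ i, (q ∘ f) ⁻¹' {i} = Set.univ
  · obtain ⟨i, h⟩ := h
    obtain ⟨e, he⟩ := hi i
    have hmem (x) : q (f x) = i := (h.symm ▸ Set.mem_univ x : x ∈ (q ∘ f) ⁻¹' {i})
    exact ha i σ hσ ⟨fun x ↦ e ⟨f x, hmem x⟩, fun b x y hxy ↦ he b _ _ (hf b x y hxy)⟩
  · have hinj : (q ∘ f).Injective := fun x y hxy ↦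
      (hσ _ (hp.isInterval_preimage (BiOrder.isInterval_singleton _ (q (f y))))).resolve_right
        (h _) hxy rfl
    exact hD.of_isPatternOf ⟨_, hp.isEmbedding_of_injective hinj⟩ hs

theorem wreathClosure_partiallyWellOrderedOn (hD : IsFinSimpleClass D) :
    (wreathClosure D).PartiallyWellOrderedOn IsPatternOf := by
  rw [Set.PartiallyWellOrderedOn.iff_not_exists_isMinBadSeq Sigma.fst]
  rintro ⟨f, hf, hmin⟩
  let T : Set SizedPerm := {p | p.1 ≤ 1} ∪ ⋃ σ ∈ hD.finite_isSimple.toFinset,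
    (fun a ↦ inflate σ.2 a) '' Set.univ.pi fun _ ↦ properPatterns f
  have hT : T.PartiallyWellOrderedOn IsPatternOf := by
    refine (finite_size_le 1).partiallyWellOrderedOn.union ?_
    rw [Finset.partiallyWellOrderedOn_bUnion]
    intro σ _
    have hpatterns := partiallyWellOrderedOn_properPatterns IsPatternOf.mem_wreathClosure hf hmin
    exact (Set.PartiallyWellOrderedOn.pi (r := fun _ ↦ IsPatternOf)
      fun _ ↦ hpatterns).image_of_monotone_on fun a _ a' _ h ↦ inflate_isPatternOf_inflate h
  have hfT (n) : f n ∈ T := by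
    refine (le_or_gt (f n).1 1).imp id fun hn ↦ ?_
    obtain ⟨k, s, a, ha, heq⟩ := exists_isCanonicalInflation (f n) hn
    have hs : IsPatternOf ⟨k, s⟩ (f n) := heq ▸ isPatternOf_inflate ha.pos
    have hsD := hD.finite_isSimple.mem_toFinset.2 ⟨hf.1 n _ ha.isSimple hs, ha.isSimple⟩
    refine Set.mem_iUnion₂.2 ⟨⟨k, s⟩, hsD, a, fun i _ ↦ ?_, heq⟩
    exact ⟨n, heq ▸ component_isPatternOf_inflate s a i, heq ▸ ha.size_lt i⟩
  obtain ⟨m, n, hmn, h⟩ := hT.exists_lt hfT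
  exact hf.2 m n hmn h

theorem exists_size_bound (hD : IsFinSimpleClass D) :
    ∃ N, ∀ p ∈ wreathClosure D, p ∉ D → ∃ β : SizedPerm, β.1 ≤ N ∧ β.IsPatternOf p ∧ β ∉ D := by
  by_contra! h
  choose p hp hpD hβ using h
  have hsize (n) : n < (p n).1 := not_le.1 fun hn ↦ hpD n (hβ n _ hn (.refl _))
  let f (n : ℕ) : ℕ := Nat.rec 0 (fun _ m ↦ (p m).1) n
  have hf : StrictMono f := strictMono_nat_of_lt_succ fun n ↦ hsize _
  obtain ⟨m, n, hmn, hs⟩ :=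
    hD.wreathClosure_partiallyWellOrderedOn.exists_lt fun n ↦ hp (f n)
  exact hpD _ (hβ _ _ (hf.monotone (Nat.succ_le_of_lt hmn) : f (m + 1) ≤ f n) hs)

end IsFinSimpleClass

end WellQuasiOrder

end SizedPerm

section SkewSum

namespace BiOrder

variable {α β γ κ : Type*} {A : BiOrder α} {B : BiOrder β} {S : BiOrder κ}

/-- `A` placed to the upper left of `B`. -/
def skew (A : BiOrder α) (B : BiOrder β) : BiOrder (α ⊕ β) where
  r b
    | .inl x, .inl y => A.r b x y
    | .inr x, .inr y => B.r b x y
    | .inl _, .inr _ => b = false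
    | .inr _, .inl _ => b = true
  isStrictTotalOrder b :=
    { trichotomous := by
        rintro (x | x) (y | y) hxy hyx
        · exact congrArg _ (Std.Trichotomous.trichotomous (r := A.r b) x y hxy hyx)
        · cases b <;> simp at hxy hyx
        · cases b <;> simp at hxy hyx
        · exact congrArg _ (Std.Trichotomous.trichotomous (r := B.r b) x y hxy hyx)
      irrefl := Sum.rec (irrefl_of (A.r b)) (irrefl_of (B.r b))
      trans := by
        rintro (x | x) (y | y) (z | z) hxy hyz
        · exact trans_of (A.r b) hxy hyz
        all_goals first
          | exact trans_of (B.r b) hxy hyz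
          | exact hxy
          | exact hyz
          | exact absurd (hxy.symm.trans hyz) (by decide) }

theorem IsIsomorphic.skew {α' β' : Type*} {A' : BiOrder α'} {B' : BiOrder β'}
    (hA : A.IsIsomorphic A') (hB : B.IsIsomorphic B') :
    (A.skew B).IsIsomorphic (A'.skew B') := by
  obtain ⟨e, he⟩ := hA
  obtain ⟨f, hf⟩ := hB
  refine ⟨e.sumCongr f, ?_⟩
  rintro b (x | x) (y | y) h
  exacts [he _ _ _ h, h, h, hf _ _ _ h]

theorem skew_assoc_isIsomorphic (A : BiOrder α) (B : BiOrder β) (C : BiOrder γ) :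
    ((A.skew B).skew C).IsIsomorphic (A.skew (B.skew C)) := by
  refine ⟨Equiv.sumAssoc α β γ, ?_⟩
  rintro b ((x | x) | x) ((y | y) | y) h <;> exact h

theorem IsInflationOf.swap (h : A.IsInflationOf S) : A.swap.IsInflationOf S.swap := by
  obtain ⟨q, hq, hp⟩ := h
  exact ⟨q, hq, hp.swap⟩

theorem IsSimple.swap (h : A.IsSimple) : A.swap.IsSimple :=
  fun I hI ↦ h I fun b ↦ by simpa only [BiOrder.swap, Bool.not_not] using hI !b

end BiOrder

/-- The permutation `21`. -/
def skewPerm : Perm 2 := Equiv.swap 0 1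

namespace SizedPerm

open BiOrder

/-- The skew sum `p ⊖ q`. -/
noncomputable def skewSum (p q : SizedPerm) : SizedPerm := (p.toBiOrder.skew q.toBiOrder).toPerm

theorem skewSum_assoc (p q r : SizedPerm) :
    skewSum (skewSum p q) r = skewSum p (skewSum q r) :=
  IsIsomorphic.toPerm_eq_toPerm <| ((toPerm_isIsomorphic _).skew (.refl _)).trans <|
    (skew_assoc_isIsomorphic _ _ _).trans ((IsIsomorphic.refl _).skew (toPerm_isIsomorphic _).symm)

theorem skewSum_eq_inflate (p q : SizedPerm) : skewSum p q = inflate skewPerm ![p, q] := by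
  have hproj : (p.toBiOrder.skew q.toBiOrder).IsProjection (toBiOrder ⟨2, skewPerm⟩)
      (Sum.elim (fun _ ↦ (0 : Fin 2)) fun _ ↦ (1 : Fin 2)) := by
    rintro b (x | x) (y | y) h hne
    · exact absurd rfl hne
    · obtain rfl : b = false := h
      exact (by decide : (0 : Fin 2) < 1)
    · obtain rfl : b = true := h
      exact (by decide : skewPerm 1 < skewPerm 0)
    · exact absurd rfl hne
  refine toPerm_eq_inflate hproj (Fin.forall_fin_two.2 ⟨.symm ?_, .symm ?_⟩)
  · refine IsEmbedding.isIsomorphic_restrict (A := p.toBiOrder) (f := Sum.inl)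
      (fun _ _ _ h ↦ h) ?_
    ext (x | x) <;> simp
  · refine IsEmbedding.isIsomorphic_restrict (A := q.toBiOrder) (f := Sum.inr)
      (fun _ _ _ h ↦ h) ?_
    ext (x | x) <;> simp

theorem skewSum_fst (p q : SizedPerm) : (skewSum p q).1 = p.1 + q.1 := by
  simp [skewSum_eq_inflate, inflate_fst]

theorem skewSum_fst_pos {p : SizedPerm} (q : SizedPerm) (hp : 0 < p.1) : 0 < (skewSum p q).1 :=
  (skewSum_fst p q).symm ▸ Nat.add_pos_left hp _

theorem inv_skewSum (p q : SizedPerm) : (skewSum p q).inv = skewSum q.inv p.inv := by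
  have hinv : skewPerm⁻¹ = skewPerm := by decide
  have hval : skewPerm 0 = 1 ∧ skewPerm 1 = 0 := by decide
  rw [skewSum_eq_inflate, skewSum_eq_inflate, inv_inflate, hinv]
  congr 1
  refine funext (Fin.forall_fin_two.2 ⟨?_, ?_⟩)
  · rw [hval.1]; rfl
  · rw [hval.2]; rfl

theorem isPatternOf_skewSum_left (p q : SizedPerm) : p.IsPatternOf (skewSum p q) :=
  skewSum_eq_inflate p q ▸ component_isPatternOf_inflate skewPerm ![p, q] 0

theorem isPatternOf_skewSum_right (p q : SizedPerm) : q.IsPatternOf (skewSum p q) :=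
  skewSum_eq_inflate p q ▸ component_isPatternOf_inflate skewPerm ![p, q] 1

theorem isInflationOf_inv {p : SizedPerm} {τ : Perm 2}
    (h : p.toBiOrder.IsInflationOf (toBiOrder ⟨2, τ⟩)) :
    p.inv.toBiOrder.IsInflationOf (toBiOrder ⟨2, τ⟩) := by
  have hτ : ∀ τ : Perm 2, τ⁻¹ = τ := by decide
  have hinv : inv ⟨2, τ⟩ = ⟨2, τ⟩ := Sigma.ext rfl (heq_of_eq (hτ τ))
  have hswap := (h.swap.congr_left p.swap_isIsomorphic_inv).congr_right
    (swap_isIsomorphic_inv ⟨2, τ⟩)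
  rwa [hinv] at hswap

theorem isInflationOf_inv_iff {p : SizedPerm} {τ : Perm 2} :
    p.inv.toBiOrder.IsInflationOf (toBiOrder ⟨2, τ⟩) ↔
      p.toBiOrder.IsInflationOf (toBiOrder ⟨2, τ⟩) :=
  ⟨fun h ↦ p.inv_inv ▸ isInflationOf_inv h, isInflationOf_inv⟩

/-- Skew indecomposability: `p` is not the skew sum of two nonempty permutations. -/
def SkewIndecomposable (p : SizedPerm) : Prop :=
  ¬p.toBiOrder.IsInflationOf (toBiOrder ⟨2, skewPerm⟩)

theorem SkewIndecomposable.inv {p : SizedPerm} (h : p.SkewIndecomposable) :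
    p.inv.SkewIndecomposable := fun h' ↦ h (isInflationOf_inv_iff.1 h')

theorem isInflationOf_inflate {k : ℕ} (s : Perm k) {a : Fin k → SizedPerm}
    (ha : ∀ i, 0 < (a i).1) : (inflate s a).toBiOrder.IsInflationOf (toBiOrder ⟨k, s⟩) := by
  obtain ⟨q, hsurj, hq, -⟩ := exists_surjective_isProjection_inflate s ha
  exact ⟨q, hsurj, hq⟩

theorem skewIndecomposable_of_size_eq_one {p : SizedPerm} (hp : p.1 = 1) :
    p.SkewIndecomposable := by
  rintro ⟨q, hq, -⟩
  have := Fintype.card_le_of_surjective q hq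
  simp [hp] at this

theorem not_skewIndecomposable_skewSum {p q : SizedPerm} (hp : 0 < p.1) (hq : 0 < q.1) :
    ¬(skewSum p q).SkewIndecomposable :=
  fun h ↦ h (skewSum_eq_inflate p q ▸
    isInflationOf_inflate skewPerm (Fin.forall_fin_two.2 ⟨hp, hq⟩))

theorem isCanonicalInflation_skewPerm {a : Fin 2 → SizedPerm} (ha : ∀ i, 0 < (a i).1)
    (h : (a 0).SkewIndecomposable) : IsCanonicalInflation skewPerm a where
  two_le := le_rfl
  isSimple := isSimple_of_card_eq_two (by simp)
  pos := ha
  not_isInflationOf i _ hi := by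
    obtain rfl : i = 0 := Fin.ext hi
    exact h

theorem skewSum_inj {a b a' b' : SizedPerm} (ha : a.SkewIndecomposable)
    (ha' : a'.SkewIndecomposable) (ha0 : 0 < a.1) (hb0 : 0 < b.1) (ha0' : 0 < a'.1)
    (hb0' : 0 < b'.1) (h : skewSum a b = skewSum a' b') : a = a' ∧ b = b' := by
  rw [skewSum_eq_inflate, skewSum_eq_inflate] at h
  have heq := (isCanonicalInflation_skewPerm (a := ![a, b])
    (Fin.forall_fin_two.2 ⟨ha0, hb0⟩) ha).unique (isCanonicalInflation_skewPerm (a := ![a', b'])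
    (Fin.forall_fin_two.2 ⟨ha0', hb0'⟩) ha') h
  simpa using heq

theorem exists_eq_skewSum {p : SizedPerm} (h : ¬p.SkewIndecomposable) :
    ∃ a b, a.SkewIndecomposable ∧ 0 < a.1 ∧ 0 < b.1 ∧ p = skewSum a b := by
  rw [SkewIndecomposable, not_not] at h
  have hp : 2 ≤ p.1 := by
    obtain ⟨q, hq, -⟩ := h
    simpa using Fintype.card_le_of_surjective q hq
  obtain ⟨k, s, a, ha, rfl⟩ := exists_isCanonicalInflation p hp
  obtain ⟨rfl, hs⟩ := Sigma.mk.inj_iff.1 (ha.isInflationOf_iff.1 h)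
  obtain rfl := eq_of_heq hs
  refine ⟨a 0, a 1, ha.not_isInflationOf 0 rfl rfl, ha.pos 0, ha.pos 1, ?_⟩
  rw [skewSum_eq_inflate]
  exact congrArg _ (FinVec.etaExpand_eq a).symm

theorem exists_eq_skewSum_of_inv_eq {p : SizedPerm} (hp : p.inv = p)
    (h : ¬p.SkewIndecomposable) :
    ∃ a, a.SkewIndecomposable ∧ 0 < a.1 ∧ (p = skewSum a a.inv ∨
      ∃ m, 0 < m.1 ∧ m.inv = m ∧ p = skewSum a (skewSum m a.inv)) := by
  obtain ⟨a, b, ha, ha0, hb0, rfl⟩ := exists_eq_skewSum h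
  refine ⟨a, ha, ha0, ?_⟩
  rw [inv_skewSum] at hp
  by_cases hb : b.SkewIndecomposable
  · left
    rw [(skewSum_inj (b := a.inv) hb.inv ha hb0 ha0 ha0 hb0 hp).2]
  · right
    obtain ⟨c, d, hc, hc0, hd0, hcd⟩ := exists_eq_skewSum
      fun h' : b.inv.SkewIndecomposable ↦ hb (b.inv_inv ▸ h'.inv)
    rw [hcd, skewSum_assoc] at hp
    obtain ⟨rfl, rfl⟩ := skewSum_inj hc ha hc0 (skewSum_fst_pos _ hd0) ha0 hb0 hp
    rw [inv_skewSum, inv_inv] at hcd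
    exact ⟨d, hd0, (skewSum_inj (b := d.inv) hc hc hc0 hd0 hc0 hd0 hcd).2, rfl⟩

theorem skewSum_skewSum_inv_inj {a m a' m' : SizedPerm} (ha : a.SkewIndecomposable)
    (ha' : a'.SkewIndecomposable) (ha0 : 0 < a.1) (ha0' : 0 < a'.1) (hm0 : 0 < m.1)
    (hm0' : 0 < m'.1) (hm : m.inv = m) (hm' : m'.inv = m')
    (h : skewSum a (skewSum m a.inv) = skewSum a' (skewSum m' a'.inv)) : a = a' ∧ m = m' := by
  obtain ⟨rfl, h⟩ := skewSum_inj ha ha' ha0 (skewSum_fst_pos _ hm0) ha0'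
    (skewSum_fst_pos _ hm0') h
  have hinv := congrArg SizedPerm.inv h
  rw [inv_skewSum, inv_skewSum, inv_inv, hm, hm'] at hinv
  exact ⟨rfl, (skewSum_inj ha ha ha0 hm0 ha0 hm0' hinv).2⟩

theorem skewSum_inv_ne_skewSum_skewSum_inv {a m a' : SizedPerm} (ha : a.SkewIndecomposable)
    (ha' : a'.SkewIndecomposable) (ha0 : 0 < a.1) (ha0' : 0 < a'.1) (hm0 : 0 < m.1) :
    skewSum a' a'.inv ≠ skewSum a (skewSum m a.inv) := fun h ↦ by
  obtain ⟨rfl, h⟩ := skewSum_inj (b := a'.inv) ha' ha ha0' ha0' ha0 (skewSum_fst_pos _ hm0) h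
  exact not_skewIndecomposable_skewSum (q := a'.inv) hm0 ha0' (h ▸ ha'.inv)

namespace IsCanonicalInflation

variable {k : ℕ} {s : Perm k} {a : Fin k → SizedPerm}

theorem inv (h : IsCanonicalInflation s a) (hs : (⟨k, s⟩ : SizedPerm) ≠ ⟨2, skewPerm⟩) :
    IsCanonicalInflation s⁻¹ fun i ↦ (a (s⁻¹ i)).inv where
  two_le := h.two_le
  isSimple := h.isSimple.swap.of_isIsomorphic (swap_isIsomorphic_inv ⟨k, s⟩)
  pos i := h.pos _
  not_isInflationOf i hk hi hd := by
    subst hk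
    obtain rfl : i = 0 := Fin.ext hi
    have hs' : ∀ s : Perm 2, s ≠ skewPerm → s = 1 := by decide
    obtain rfl := hs' s fun h ↦ hs (h ▸ rfl)
    exact h.not_isInflationOf 0 rfl rfl (isInflationOf_inv_iff.1 hd)

theorem symmetric_of_inv_eq (h : IsCanonicalInflation s a)
    (hs : (⟨k, s⟩ : SizedPerm) ≠ ⟨2, skewPerm⟩) (hp : (inflate s a).inv = inflate s a) :
    s⁻¹ = s ∧ ∀ i, a (s i) = (a i).inv := by
  rw [inv_inflate] at hp
  obtain ⟨-, heq⟩ := Sigma.mk.inj_iff.1 ((h.inv hs).unique h hp)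
  obtain ⟨hs, ha⟩ := Prod.mk_inj.1 (eq_of_heq heq)
  refine ⟨hs, fun i ↦ ?_⟩
  rw [← congrFun ha (s i)]
  exact congrArg (fun j ↦ (a j).inv) (s.symm_apply_apply i)

end IsCanonicalInflation

theorem inv_inflate_of_symmetric {k : ℕ} {s : Perm k} {a : Fin k → SizedPerm} (hs : s⁻¹ = s)
    (ha : ∀ i, a (s i) = (a i).inv) : (inflate s a).inv = inflate s a := by
  rw [inv_inflate, hs]
  congr 1
  funext i
  rw [ha, inv_inv]

end SizedPerm

end SkewSum

namespace SizedPerm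

section Color

/-- The colours of depth `N`: sets of permutations of length at most `N`, paired with sets of
permutations of length two. -/
abbrev Color (N : ℕ) := Set (Σ n : Fin (N + 1), Perm n) × Set (Perm 2)

/-- The colour of `p`: its patterns of length at most `N`, and the permutations of length two that
`p` is an inflation of. -/
def color (N : ℕ) (p : SizedPerm) : Color N :=
  ({β | IsPatternOf ⟨β.1, β.2⟩ p}, {τ | p.toBiOrder.IsInflationOf (toBiOrder ⟨2, τ⟩)})

variable {N k : ℕ} {s : Perm k} {p q : SizedPerm} {a a' : Fin k → SizedPerm}

theorem color_eq_iff : color N p = color N q ↔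
    (∀ β : SizedPerm, β.1 ≤ N → (β.IsPatternOf p ↔ β.IsPatternOf q)) ∧
      ∀ τ : Perm 2, p.toBiOrder.IsInflationOf (toBiOrder ⟨2, τ⟩) ↔
        q.toBiOrder.IsInflationOf (toBiOrder ⟨2, τ⟩) := by
  rw [color, color, Prod.mk_inj, Set.ext_iff, Set.ext_iff]
  refine and_congr ⟨fun h β hβ ↦ h ⟨⟨β.1, Nat.lt_succ_of_le hβ⟩, β.2⟩, fun h β ↦ ?_⟩ Iff.rfl
  exact h ⟨β.1, β.2⟩ (Nat.le_of_lt_succ β.1.2)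

theorem color_inv (h : color N p = color N q) : color N p.inv = color N q.inv := by
  rw [color_eq_iff] at h ⊢
  refine ⟨fun β hβ ↦ ?_, fun τ ↦ ?_⟩
  · rw [isPatternOf_inv_iff, isPatternOf_inv_iff]
    exact h.1 _ hβ
  · rw [isInflationOf_inv_iff, isInflationOf_inv_iff]
    exact h.2 τ

theorem SkewIndecomposable.of_color_eq (h : color N p = color N q) (hp : p.SkewIndecomposable) :
    q.SkewIndecomposable := fun hq ↦ hp (((color_eq_iff.1 h).2 _).2 hq)

/-- A pattern `β` of `inflate s a` is an inflation by patterns of the `a i` of length at most that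
of `β`. -/
theorem IsPatternOf.inflate_of_color_eq (h : ∀ i, color N (a i) = color N (a' i)) {β : SizedPerm}
    (hβ : β.1 ≤ N) (hs : β.IsPatternOf (inflate s a)) : β.IsPatternOf (inflate s a') := by
  obtain ⟨f, hf⟩ := hs
  obtain ⟨q, hq, hi⟩ := exists_isProjection_inflate s a
  rw [eq_inflate (hq.comp_isEmbedding hf) fun i ↦ (BiOrder.toPerm_isIsomorphic _).symm]
  refine inflate_isPatternOf_inflate fun i ↦ ((color_eq_iff.1 (h i)).1 _ ?_).1 ?_
  · have hcard := Nat.card_le_card_of_injective (Subtype.val : {x | (q ∘ f) x = i} → _)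
      Subtype.val_injective
    rw [Nat.card_fin] at hcard
    exact (BiOrder.toPerm_fst _).trans_le (hcard.trans hβ)
  · obtain ⟨e, he⟩ := hi i
    exact toPerm_isPatternOf (f := fun x ↦ e ⟨f x, x.2⟩) fun b x y hxy ↦ he b _ _ (hf b _ _ hxy)

theorem color_inflate_eq (h : ∀ i, color N (a i) = color N (a' i))
    (hd : ∀ τ : Perm 2, (inflate s a).toBiOrder.IsInflationOf (toBiOrder ⟨2, τ⟩) ↔
      (inflate s a').toBiOrder.IsInflationOf (toBiOrder ⟨2, τ⟩)) :
    color N (inflate s a) = color N (inflate s a') :=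
  color_eq_iff.2 ⟨fun _ hβ ↦ ⟨.inflate_of_color_eq h hβ, .inflate_of_color_eq
    (fun i ↦ (h i).symm) hβ⟩, hd⟩

namespace IsCanonicalInflation

theorem of_color_eq (hc : IsCanonicalInflation s a) (h : ∀ i, color N (a i) = color N (a' i))
    (hpos : ∀ i, 0 < (a' i).1) : IsCanonicalInflation s a' where
  two_le := hc.two_le
  isSimple := hc.isSimple
  pos := hpos
  not_isInflationOf i hk hi hd := by
    subst hk
    exact hc.not_isInflationOf i rfl hi (((color_eq_iff.1 (h i)).2 s).2 hd)

theorem color_inflate_eq (hc : IsCanonicalInflation s a) (hc' : IsCanonicalInflation s a')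
    (h : ∀ i, color N (a i) = color N (a' i)) : color N (inflate s a) = color N (inflate s a') :=
  SizedPerm.color_inflate_eq h fun τ ↦ by rw [hc.isInflationOf_iff, hc'.isInflationOf_iff]

end IsCanonicalInflation

theorem color_inflate_two_eq {τ : Perm 2} {a a' : Fin 2 → SizedPerm} (ha : ∀ i, 0 < (a i).1)
    (ha' : ∀ i, 0 < (a' i).1) (h : ∀ i, color N (a i) = color N (a' i)) :
    color N (inflate τ a) = color N (inflate τ a') := by
  have isInflationOf_iff {a : Fin 2 → SizedPerm} (ha : ∀ i, 0 < (a i).1) {τ' : Perm 2} :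
      (inflate τ a).toBiOrder.IsInflationOf (toBiOrder ⟨2, τ'⟩) ↔ τ = τ' := by
    refine ⟨fun ⟨q, hq, hp⟩ ↦ ?_, fun h ↦ h ▸ isInflationOf_inflate τ ha⟩
    obtain ⟨q', hq', hp'⟩ := isInflationOf_inflate τ ha
    exact hp'.eq_of_isProjection_two hq' hp hq
  exact color_inflate_eq h fun τ' ↦ by rw [isInflationOf_iff ha, isInflationOf_iff ha']

theorem color_skewSum_eq {a b a' b' : SizedPerm} (ha : color N a = color N a')
    (hb : color N b = color N b') (ha0 : 0 < a.1) (hb0 : 0 < b.1) (ha0' : 0 < a'.1)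
    (hb0' : 0 < b'.1) : color N (skewSum a b) = color N (skewSum a' b') := by
  rw [skewSum_eq_inflate, skewSum_eq_inflate]
  exact color_inflate_two_eq (Fin.forall_fin_two.2 ⟨ha0, hb0⟩)
    (Fin.forall_fin_two.2 ⟨ha0', hb0'⟩) (Fin.forall_fin_two.2 ⟨ha, hb⟩)

end Color

section SymmetricClass

/-- `D` is an inverse-closed class with finitely many simple permutations, and a member of its
wreath closure lies in `D` as soon as its patterns of length at most `N` do. -/
structure IsSymmetricClass (D : Set SizedPerm) (N : ℕ) : Prop extends IsFinSimpleClass D where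
  inv_mem : ∀ {p : SizedPerm}, p ∈ D → p.inv ∈ D
  exists_not_mem : ∀ p ∈ wreathClosure D, p ∉ D → ∃ β : SizedPerm,
    β.1 ≤ N ∧ β.IsPatternOf p ∧ β ∉ D

namespace IsSymmetricClass

variable {D : Set SizedPerm} {N : ℕ}

theorem inflate_mem (hD : IsSymmetricClass D N) {k : ℕ} {s : Perm k} {a a' : Fin k → SizedPerm}
    (hpos : ∀ i, 0 < (a i).1) (h : ∀ i, color N (a i) = color N (a' i)) (ha : inflate s a ∈ D)
    (ha' : ∀ i, a' i ∈ D) : inflate s a' ∈ D := by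
  by_contra hn
  have hs := hD.of_isPatternOf (isPatternOf_inflate hpos) ha
  obtain ⟨β, hβ, hpat, hβD⟩ := hD.exists_not_mem _
    (hD.inflate_mem_wreathClosure hs fun i ↦ hD.subset_wreathClosure (ha' i)) hn
  exact hβD (hD.of_isPatternOf (hpat.inflate_of_color_eq (fun i ↦ (h i).symm) hβ) ha)

theorem skewSum_mem (hD : IsSymmetricClass D N) {a b a' b' : SizedPerm}
    (ha : color N a = color N a') (hb : color N b = color N b') (ha0 : 0 < a.1) (hb0 : 0 < b.1)
    (h : skewSum a b ∈ D) (ha' : a' ∈ D) (hb' : b' ∈ D) : skewSum a' b' ∈ D := by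
  rw [skewSum_eq_inflate] at h ⊢
  exact hD.inflate_mem (Fin.forall_fin_two.2 ⟨ha0, hb0⟩) (Fin.forall_fin_two.2 ⟨ha, hb⟩) h
    (Fin.forall_fin_two.2 ⟨ha', hb'⟩)

end IsSymmetricClass

end SymmetricClass

end SizedPerm

section WeightGenFun

open PowerSeries Finset
open scoped PowerSeries

variable {R : Type*} {α β ι : Type*}

/-- The generating function `∑ x, X ^ w x` of a type with a weight `w`. A coefficient whose fiber is
infinite is `0`, by the convention of `Nat.card`. -/
noncomputable def weightGenFun (R : Type*) [Semiring R] {α : Type*} (w : α → ℕ) : R⟦X⟧ :=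
  mk fun n ↦ (Nat.card {x // w x = n} : R)

theorem finite_fiber_of_injective {w : α → ℕ} {w' : β → ℕ} (hw : ∀ n, Finite {x // w x = n})
    {f : β → α} (hf : Function.Injective f) (h : ∀ y, w (f y) ≤ w' y) (n : ℕ) :
    Finite {y // w' y = n} :=
  have (k : Fin (n + 1)) : Finite {x // w x = k} := hw k
  Finite.of_injective
    (fun y ↦ (⟨⟨w (f y), Nat.lt_succ_of_le ((h y).trans_eq y.2)⟩, f y, rfl⟩ :
      Σ k : Fin (n + 1), {x // w x = k}))
    fun _ _ h ↦ Subtype.ext (hf (congrArg (fun z ↦ z.2.1) h))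

section Semiring

variable [Semiring R]

theorem coeff_weightGenFun (w : α → ℕ) (n : ℕ) :
    coeff n (weightGenFun R w) = (Nat.card {x // w x = n} : R) :=
  coeff_mk n _

theorem weightGenFun_congr {w : α → ℕ} {w' : β → ℕ} (e : α ≃ β) (h : ∀ x, w' (e x) = w x) :
    weightGenFun R w = weightGenFun R w' := by
  ext n
  have hcard : Nat.card {x // w x = n} = Nat.card {y // w' y = n} :=
    Nat.card_congr (e.subtypeEquiv fun x ↦ by rw [h])
  rw [coeff_weightGenFun, coeff_weightGenFun, hcard]

theorem weightGenFun_of_isEmpty [IsEmpty α] (w : α → ℕ) : weightGenFun R w = 0 := by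
  ext n
  simp [coeff_weightGenFun]

theorem constantCoeff_weightGenFun {w : α → ℕ} (h : ∀ x, 0 < w x) :
    constantCoeff (weightGenFun R w) = 0 := by
  have : IsEmpty {x // w x = 0} := ⟨fun x ↦ (h x.1).ne' x.2⟩
  rw [← coeff_zero_eq_constantCoeff_apply, coeff_weightGenFun, Nat.card_of_isEmpty,
    Nat.cast_zero]

theorem weightGenFun_sigma [Fintype ι] {A : ι → Type*} (w : ∀ i, A i → ℕ)
    (hw : ∀ i n, Finite {x // w i x = n}) :
    weightGenFun R (fun x : Σ i, A i ↦ w x.1 x.2) = ∑ i, weightGenFun R (w i) := by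
  ext n
  let e : {x : Σ i, A i // w x.1 x.2 = n} ≃ Σ i, {x // w i x = n} :=
    { toFun := fun x ↦ ⟨x.1.1, x.1.2, x.2⟩
      invFun := fun x ↦ ⟨⟨x.1, x.2.1⟩, x.2.2⟩ }
  rw [coeff_weightGenFun, map_sum, Nat.card_congr e, Nat.card_sigma, Nat.cast_sum]
  exact sum_congr rfl fun i _ ↦ (coeff_weightGenFun _ _).symm

theorem weightGenFun_eq_sum_subtype [Fintype ι] (w : α → ℕ) (hw : ∀ n, Finite {x // w x = n})
    {P : ι → α → Prop} (h : ∀ x, ∃! i, P i x) :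
    weightGenFun R w = ∑ i, weightGenFun R fun x : {x // P i x} ↦ w x := by
  choose g hg hg' using h
  let e : α ≃ Σ i, {x // P i x} :=
    { toFun := fun x ↦ ⟨g x, x, hg x⟩
      invFun := fun x ↦ x.2.1
      right_inv := by
        rintro ⟨i, x, hx⟩
        obtain rfl := hg' x i hx
        rfl }
  rw [← weightGenFun_sigma]
  · exact weightGenFun_congr e fun _ ↦ rfl
  · exact fun i ↦ finite_fiber_of_injective hw Subtype.val_injective fun _ ↦ le_rfl

theorem weightGenFun_prod (w : α → ℕ) (w' : β → ℕ) (hw : ∀ n, Finite {x // w x = n})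
    (hw' : ∀ n, Finite {x // w' x = n}) :
    weightGenFun R (fun x : α × β ↦ w x.1 + w' x.2) = weightGenFun R w * weightGenFun R w' := by
  ext n
  let e : {x : α × β // w x.1 + w' x.2 = n} ≃
      Σ l : antidiagonal n, {x // w x = l.1.1} × {x // w' x = l.1.2} :=
    { toFun := fun x ↦ ⟨⟨(w x.1.1, w' x.1.2), mem_antidiagonal.2 x.2⟩, ⟨x.1.1, rfl⟩, ⟨x.1.2, rfl⟩⟩
      invFun := fun x ↦ ⟨(x.2.1.1, x.2.2.1), by
        rw [x.2.1.2, x.2.2.2]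
        exact mem_antidiagonal.1 x.1.2⟩
      right_inv := by
        rintro ⟨⟨⟨i, j⟩, hl⟩, ⟨x, hx⟩, ⟨y, hy⟩⟩
        obtain rfl : w x = i := hx
        obtain rfl : w' y = j := hy
        rfl }
  rw [coeff_weightGenFun, coeff_mul, Nat.card_congr e, Nat.card_sigma, Nat.cast_sum,
    ← sum_coe_sort (antidiagonal n)]
  refine sum_congr rfl fun l _ ↦ ?_
  rw [Nat.card_prod, Nat.cast_mul, coeff_weightGenFun, coeff_weightGenFun]

end Semiring

theorem finite_pi_sum_eq [Fintype ι] {A : ι → Type*} {w : ∀ i, A i → ℕ}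
    (hw : ∀ i n, Finite {x // w i x = n}) (n : ℕ) :
    Finite {x : ∀ i, A i // ∑ i, w i (x i) = n} := by
  have hlt (x : ∀ i, A i) (h : ∑ i, w i (x i) = n) (i) : w i (x i) < n + 1 := by
    rw [← h, Nat.lt_succ_iff]
    exact single_le_sum (f := fun i ↦ w i (x i)) (fun _ _ ↦ Nat.zero_le _) (mem_univ i)
  refine Finite.of_injective (β := Σ l : ι → Fin (n + 1), ∀ i, {y // w i y = l i})
    (fun x ↦ ⟨fun i ↦ ⟨w i (x.1 i), hlt x.1 x.2 i⟩, fun i ↦ ⟨x.1 i, rfl⟩⟩) fun x y h ↦ ?_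
  exact Subtype.ext (congrArg (fun z : Σ l : ι → Fin (n + 1), ∀ i, {y // w i y = l i} ↦
    fun i ↦ (z.2 i).1) h)

theorem weightGenFun_pi [CommSemiring R] [Fintype ι] {A : ι → Type*} (w : ∀ i, A i → ℕ)
    (hw : ∀ i n, Finite {x // w i x = n}) :
    weightGenFun R (fun x : ∀ i, A i ↦ ∑ i, w i (x i)) = ∏ i, weightGenFun R (w i) := by
  classical
  ext n
  let e : {x : ∀ i, A i // ∑ i, w i (x i) = n} ≃
      Σ l : finsuppAntidiag (univ : Finset ι) n, ∀ i, {y // w i y = l.1 i} :=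
    { toFun := fun x ↦ ⟨⟨Finsupp.equivFunOnFinite.symm fun i ↦ w i (x.1 i), by simpa using x.2⟩,
        fun i ↦ ⟨x.1 i, rfl⟩⟩
      invFun := fun x ↦ ⟨fun i ↦ (x.2 i).1,
        (sum_congr rfl fun i _ ↦ (x.2 i).2).trans (mem_finsuppAntidiag.1 x.1.2).1⟩
      right_inv := by
        rintro ⟨⟨l, hl⟩, x⟩
        obtain ⟨y, hy, rfl⟩ : ∃ (y : ∀ i, A i) (hy : ∀ i, w i (y i) = l i),
          x = fun i ↦ ⟨y i, hy i⟩ := ⟨fun i ↦ (x i).1, fun i ↦ (x i).2, rfl⟩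
        obtain rfl : (Finsupp.equivFunOnFinite.symm fun i ↦ w i (y i)) = l := by
          ext i
          exact hy i
        rfl }
  rw [coeff_weightGenFun, coeff_prod, Nat.card_congr e, Nat.card_sigma, Nat.cast_sum,
    ← sum_coe_sort (finsuppAntidiag (univ : Finset ι) n)]
  refine sum_congr rfl fun l _ ↦ ?_
  rw [Nat.card_pi, Nat.cast_prod]
  exact prod_congr rfl fun i _ ↦ (coeff_weightGenFun _ _).symm

theorem isAlgebraic_weightGenFun_of_finite [CommRing R] [Nontrivial R] [Finite α] (w : α → ℕ) :
    IsAlgebraic (Polynomial R) (weightGenFun R w) := by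
  classical
  have := Fintype.ofFinite α
  have heq : weightGenFun R w =
      algebraMap (Polynomial R) R⟦X⟧ (∑ x, Polynomial.X ^ w x) := by
    ext n
    have hcoe : coeff n (algebraMap (Polynomial R) R⟦X⟧ (∑ x, Polynomial.X ^ w x)) =
      (∑ x, Polynomial.X ^ w x : Polynomial R).coeff n := Polynomial.coeff_coe _ _
    rw [hcoe, Polynomial.finsetSum_coeff]
    simp [coeff_weightGenFun, Polynomial.coeff_X_pow, Fintype.card_subtype, eq_comm]
  rw [heq]
  exact isAlgebraic_algebraMap _

section Equivariant

open Function

variable [LinearOrder ι] {s : ι → ι} {A : Type*} {ν : A → A}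

theorem forall_of_forall_fixed_of_forall_lt (hs : Involutive s) {P : ι → Prop}
    (hP : ∀ i, P i → P (s i)) (hfix : ∀ i, s i = i → P i) (hlt : ∀ i, i < s i → P i) (i : ι) :
    P i := by
  rcases lt_trichotomy (s i) i with h | h | h
  · exact hs i ▸ hP _ (hlt (s i) (by rwa [hs]))
  · exact hfix i h
  · exact hlt i h

theorem sum_eq_of_involutive [Fintype ι] {M : Type*} [AddCommMonoid M] (hs : Involutive s)
    {f : ι → M} (hf : ∀ i, f (s i) = f i) :
    ∑ i, f i = ∑ i : {i // s i = i}, f i + ∑ i : {i // i < s i}, 2 • f i := by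
  have sum_subtype_eq (p : ι → Prop) [DecidablePred p] (g : ι → M) :
      ∑ i : {i // p i}, g i = ∑ i, if p i then g i else 0 := by
    rw [← sum_filter]
    exact (sum_subtype _ (by simp) _).symm
  have sum_gt_eq : (∑ i, if s i < i then f i else 0) = ∑ i, if i < s i then f i else 0 := by
    rw [← Equiv.sum_comp hs.toPerm]
    simp only [Involutive.coe_toPerm, hs _, hf]
  have split (i) : f i = (if s i = i then f i else 0) +
      ((if i < s i then f i else 0) + if s i < i then f i else 0) := by
    rcases lt_trichotomy (s i) i with h | h | h
    · simp [h, h.ne, h.not_gt]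
    · simp [h]
    · simp [h, h.ne', h.not_gt]
  rw [sum_congr rfl fun i _ ↦ split i, sum_add_distrib, sum_add_distrib, sum_gt_eq, ← two_nsmul,
    sum_subtype_eq, sum_subtype_eq _ fun i ↦ 2 • f i, ← sum_nsmul]
  simp only [smul_ite, smul_zero]

theorem exists_equivariant (hs : Involutive s) (hν : Involutive ν) (x : {i // s i = i} → A)
    (hx : ∀ i, ν (x i) = x i) (y : {i // i < s i} → A) :
    ∃ a : ι → A, (∀ i, a (s i) = ν (a i)) ∧ (∀ i : {i // s i = i}, a i = x i) ∧
      ∀ i : {i // i < s i}, a i = y i := by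
  have lt_of_not {i : ι} (h : ¬s i = i) (h' : ¬i < s i) : s i < s (s i) := by
    rw [hs]
    exact (not_lt.1 h').lt_of_ne h
  refine ⟨fun i ↦ if h : s i = i then x ⟨i, h⟩ else if h' : i < s i then y ⟨i, h'⟩ else
    ν (y ⟨s i, lt_of_not h h'⟩), fun i ↦ ?_, fun i ↦ ?_, fun i ↦ ?_⟩
  · rcases lt_trichotomy (s i) i with h | h | h
    · simp [h, h.ne, h.ne', h.not_gt, hs i, hν _]
    · simp [h, hx]
    · simp [h, h.ne, h.ne', h.not_gt, hs i]
  · simp [i.2]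
  · simp [i.2, i.2.ne']

/-- A sequence `a` with `a (s i) = ν (a i)` for involutions `s` and `ν` amounts to `ν`-fixed values
at the fixed points of `s` and arbitrary values at one point of each remaining orbit. -/
noncomputable def equivariantEquiv (hs : Involutive s) (hν : Involutive ν) {Q : ι → A → Prop}
    (hQ : ∀ i x, Q i x → Q (s i) (ν x)) :
    {a : ∀ i, {x // Q i x} // ∀ i, (a (s i)).1 = ν (a i).1} ≃
      (∀ i : {i // s i = i}, {x // Q i x ∧ ν x = x}) × ∀ i : {i // i < s i}, {x // Q i x} := by
  refine Equiv.ofBijective (fun a ↦ ⟨fun i ↦ ⟨(a.1 i).1, (a.1 i).2, ?_⟩, fun i ↦ a.1 i⟩)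
    ⟨fun a b h ↦ Subtype.ext (funext ?_), fun ⟨x, y⟩ ↦ ?_⟩
  · exact (a.2 i).symm.trans (congrArg (fun j ↦ (a.1 j).1) i.2)
  · refine forall_of_forall_fixed_of_forall_lt hs (fun i hi ↦ Subtype.ext ?_)
      (fun i hi ↦ Subtype.ext (congrArg (fun z ↦ (z.1 ⟨i, hi⟩).1) h))
      (fun i hi ↦ congrArg (fun z ↦ z.2 ⟨i, hi⟩) h)
    rw [a.2, b.2, hi]
  · obtain ⟨a, ha, hx, hy⟩ := exists_equivariant hs hν (fun i ↦ (x i).1) (fun i ↦ (x i).2.2)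
      fun i ↦ (y i).1
    have ha_mem : ∀ i, Q i (a i) := forall_of_forall_fixed_of_forall_lt hs
      (fun i hi ↦ ha i ▸ hQ i _ hi) (fun i hi ↦ hx ⟨i, hi⟩ ▸ (x ⟨i, hi⟩).2.1)
      fun i hi ↦ hy ⟨i, hi⟩ ▸ (y ⟨i, hi⟩).2
    exact ⟨⟨fun i ↦ ⟨a i, ha_mem i⟩, ha⟩, Prod.ext (funext fun i ↦ Subtype.ext (hx i))
      (funext fun i ↦ Subtype.ext (hy i))⟩

theorem weightGenFun_equivariant [CommSemiring R] [Fintype ι] (hs : Involutive s)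
    (hν : Involutive ν) {Q : ι → A → Prop} (hQ : ∀ i x, Q i x → Q (s i) (ν x)) {w : A → ℕ}
    (hw : ∀ n, Finite {x // w x = n}) (hwν : ∀ x, w (ν x) = w x) :
    weightGenFun R (fun a : {a : ∀ i, {x // Q i x} // ∀ i, (a (s i)).1 = ν (a i).1} ↦
        ∑ i, w (a.1 i).1) =
      (∏ i : {i // s i = i}, weightGenFun R fun x : {x // Q i x ∧ ν x = x} ↦ w x.1) *
        ∏ i : {i // i < s i}, weightGenFun R fun x : {x // Q i x} ↦ 2 * w x.1 := by
  have hfix (i : {i // s i = i}) (n) : Finite {x : {x // Q i x ∧ ν x = x} // w x.1 = n} :=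
    finite_fiber_of_injective hw Subtype.val_injective (fun _ ↦ le_rfl) n
  have hlt (i : {i // i < s i}) (n) : Finite {x : {x // Q i x} // 2 * w x.1 = n} :=
    finite_fiber_of_injective hw Subtype.val_injective
      (fun _ ↦ Nat.le_mul_of_pos_left _ two_pos) n
  rw [← weightGenFun_pi _ hfix, ← weightGenFun_pi _ hlt,
    ← weightGenFun_prod _ _ (finite_pi_sum_eq hfix) (finite_pi_sum_eq hlt)]
  refine weightGenFun_congr (equivariantEquiv hs hν hQ) fun a ↦ ?_
  exact (sum_eq_of_involutive hs (f := fun i ↦ w (a.1 i).1) fun i ↦ by rw [a.2, hwν]).symm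

end Equivariant

end WeightGenFun

namespace SizedPerm

open scoped PowerSeries

variable {C : ∀ n, Set (Perm n)} {D : Set SizedPerm} {N : ℕ} {t c d : Color N}

section InflationRule

/-- A simple permutation of `D` together with a colour for each of its entries, prescribing the
colours of the blocks of an inflation. -/
abbrev InflationRule (D : Set SizedPerm) (N : ℕ) : Type :=
  Σ σ : {p ∈ D | p.toBiOrder.IsSimple}, Fin σ.1.1 → Color N

namespace InflationRule

/-- `p` is the canonical inflation of the simple permutation of `r` by blocks of the prescribed
colours. -/
def Produces (r : InflationRule D N) (p : SizedPerm) : Prop :=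
  ∃ a, IsCanonicalInflation r.1.1.2 a ∧ (∀ i, color N (a i) = r.2 i) ∧ inflate r.1.1.2 a = p

theorem Produces.two_le {r : InflationRule D N} {p : SizedPerm} (h : r.Produces p) : 2 ≤ p.1 := by
  obtain ⟨a, ha, -, rfl⟩ := h
  exact ha.two_le_size

theorem Produces.unique {r r' : InflationRule D N} {p : SizedPerm} (h : r.Produces p)
    (h' : r'.Produces p) : r = r' := by
  obtain ⟨⟨⟨k, s⟩, hσ⟩, c⟩ := r
  obtain ⟨⟨⟨k', s'⟩, hσ'⟩, c'⟩ := r'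
  obtain ⟨a, ha, hc, rfl⟩ := h
  obtain ⟨a', ha', hc', heq⟩ := h'
  cases ha.unique ha' heq.symm
  obtain rfl : c = c' := funext fun i ↦ (hc i).symm.trans (hc' i)
  rfl

end InflationRule

namespace IsFinSimpleClass

theorem exists_produces (hD : IsFinSimpleClass D) {p : SizedPerm} (hp : p ∈ D) (h2 : 2 ≤ p.1) :
    ∃ r : InflationRule D N, r.Produces p := by
  obtain ⟨k, s, a, ha, rfl⟩ := exists_isCanonicalInflation p h2
  exact ⟨⟨⟨⟨k, s⟩, hD.of_isPatternOf (isPatternOf_inflate ha.pos) hp, ha.isSimple⟩,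
    fun i ↦ color N (a i)⟩, a, ha, fun _ ↦ rfl, rfl⟩

theorem finite_inflationRule (hD : IsFinSimpleClass D) : Finite (InflationRule D N) :=
  have := hD.finite_isSimple.to_subtype
  inferInstance

end IsFinSimpleClass

end InflationRule

section Colored

/-- The nonempty members of `D` of colour `t`. -/
abbrev Colored (D : Set SizedPerm) (N : ℕ) (t : Color N) : Type :=
  {p : SizedPerm // p ∈ D ∧ 0 < p.1 ∧ color N p = t}

/-- The generating function in `x ^ 2` of the permutations of `D` of a given colour: in an
involution such a block `a` comes along with its mirror image `a.inv`. -/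
noncomputable def coloredGenFun (D : Set SizedPerm) (N : ℕ) (t : Color N) : ℚ⟦X⟧ :=
  weightGenFun ℚ fun p : Colored D N t ↦ 2 * p.1.1

theorem constantCoeff_coloredGenFun (t : Color N) :
    PowerSeries.constantCoeff (coloredGenFun D N t) = 0 :=
  constantCoeff_weightGenFun fun p ↦ Nat.mul_pos two_pos p.2.2.1

theorem finite_size_eq (n : ℕ) : Finite {p : SizedPerm // p.1 = n} :=
  (finite_size_le n).subset fun _ h ↦ h.le

theorem finite_colored_two_mul_size_eq (t : Color N) (n : ℕ) :
    Finite {p : Colored D N t // 2 * p.1.1 = n} :=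
  finite_fiber_of_injective finite_size_eq Subtype.val_injective
    (fun _ ↦ Nat.le_mul_of_pos_left _ two_pos) n

namespace IsSymmetricClass

theorem produces_inflate (hD : IsSymmetricClass D N) {r : InflationRule D N} {p : SizedPerm}
    (hp : p ∈ D) (ht : color N p = t) (hr : r.Produces p) (x : ∀ i, Colored D N (r.2 i)) :
    IsCanonicalInflation r.1.1.2 (fun i ↦ (x i).1) ∧ inflate r.1.1.2 (fun i ↦ (x i).1) ∈ D ∧
      color N (inflate r.1.1.2 fun i ↦ (x i).1) = t := by
  obtain ⟨a, ha, hc, rfl⟩ := hr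
  have hx (i) : color N (a i) = color N (x i).1 := (hc i).trans (x i).2.2.2.symm
  have hcan := ha.of_color_eq hx fun i ↦ (x i).2.2.1
  exact ⟨hcan, hD.inflate_mem ha.pos hx hp fun i ↦ (x i).2.1,
    (ha.color_inflate_eq hcan hx).symm.trans ht⟩

/-- Inflation as a bijection from sequences of blocks of the colours prescribed by `r` to
permutations produced by `r`, as soon as `r` produces some permutation `p` of colour `t`. -/
noncomputable def inflationEquiv (hD : IsSymmetricClass D N) {r : InflationRule D N}
    (p : {p : Colored D N t // r.Produces p.1}) :
    (∀ i, Colored D N (r.2 i)) ≃ {p : Colored D N t // r.Produces p.1} := by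
  have key := hD.produces_inflate p.1.2.1 p.1.2.2.2 p.2
  refine Equiv.ofBijective (fun x ↦ ⟨⟨inflate r.1.1.2 fun i ↦ (x i).1, (key x).2.1,
    two_pos.trans_le (key x).1.two_le_size, (key x).2.2⟩, _, (key x).1, fun i ↦ (x i).2.2.2, rfl⟩)
    ⟨fun x y h ↦ ?_, ?_⟩
  · have hxy := (key x).1.unique (key y).1 (congrArg (fun z ↦ z.1.1) h)
    simp only [Sigma.mk.injEq, heq_eq_eq, Prod.mk.injEq, true_and] at hxy
    exact funext fun i ↦ Subtype.ext (congrFun hxy i)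
  · rintro ⟨q, a, ha, hc, heq⟩
    exact ⟨fun i ↦ ⟨a i, hD.of_isPatternOf (component_isPatternOf_inflate _ a i)
      (heq ▸ q.2.1), ha.pos i, hc i⟩, Subtype.ext (Subtype.ext heq)⟩

theorem inflationEquiv_apply (hD : IsSymmetricClass D N) {r : InflationRule D N}
    (p : {p : Colored D N t // r.Produces p.1}) (x : ∀ i, Colored D N (r.2 i)) :
    (hD.inflationEquiv p x).1.1 = inflate r.1.1.2 fun i ↦ (x i).1 := rfl

theorem isProperIn_weightGenFun_produces (hD : IsSymmetricClass D N) (t : Color N)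
    (r : InflationRule D N) : IsProperIn (coloredGenFun D N)
      (weightGenFun ℚ fun p : {p : Colored D N t // r.Produces p.1} ↦ 2 * p.1.1.1) := by
  rcases isEmpty_or_nonempty {p : Colored D N t // r.Produces p.1} with h | ⟨⟨p⟩⟩
  · rw [weightGenFun_of_isEmpty]
    exact .of_isAlgebraic _ isAlgebraic_zero
  · have hprod : (weightGenFun ℚ fun p : {p : Colored D N t // r.Produces p.1} ↦ 2 * p.1.1.1) =
        ∏ i, coloredGenFun D N (r.2 i) := by
      refine (weightGenFun_congr (hD.inflationEquiv p) fun x ↦ ?_).symm.trans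
        (weightGenFun_pi (fun i (p : Colored D N (r.2 i)) ↦ 2 * p.1.1)
          fun i ↦ finite_colored_two_mul_size_eq _)
      rw [inflationEquiv_apply, inflate_fst, Finset.mul_sum]
    obtain ⟨a, ha, -⟩ := p.2
    rw [hprod]
    exact .prod (by rw [Fintype.card_fin]; exact Nat.ne_of_gt ha.two_le) r.2

theorem isAlgebraic_coloredGenFun (hD : IsSymmetricClass D N) (t : Color N) :
    IsAlgebraic (Polynomial ℚ) (coloredGenFun D N t) := by
  have := hD.finite_inflationRule (N := N)
  have := Fintype.ofFinite (InflationRule D N)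
  refine isAlgebraic_of_isProperIn constantCoeff_coloredGenFun (fun t ↦ ?_) t
  let Decomposes (o : Option (InflationRule D N)) (p : SizedPerm) : Prop :=
    o.elim (p.1 = 1) fun r ↦ r.Produces p
  have existsUnique_decomposes (p : Colored D N t) : ∃! o, Decomposes o p.1 := by
    by_cases h1 : p.1.1 = 1
    · refine ⟨none, h1, ?_⟩
      rintro (_ | r) hr
      · rfl
      · exact absurd h1 (Nat.ne_of_gt (InflationRule.Produces.two_le hr))
    · obtain ⟨r, hr⟩ := hD.exists_produces (N := N) p.2.1
        (Nat.one_lt_iff_ne_zero_and_ne_one.2 ⟨p.2.2.1.ne', h1⟩)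
      refine ⟨some r, hr, ?_⟩
      rintro (_ | r') hr'
      · exact absurd hr' h1
      · exact congrArg some (InflationRule.Produces.unique hr' hr)
  rw [coloredGenFun, weightGenFun_eq_sum_subtype _ (finite_colored_two_mul_size_eq t)
    existsUnique_decomposes]
  refine .sum fun o _ ↦ ?_
  cases o with
  | none =>
    have : Finite {p : Colored D N t // Decomposes none p.1} :=
      finite_fiber_of_injective finite_size_eq Subtype.val_injective (fun _ ↦ le_rfl) 1
    exact .of_isAlgebraic _ (isAlgebraic_weightGenFun_of_finite _)
  | some r => exact hD.isProperIn_weightGenFun_produces t r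

end IsSymmetricClass

end Colored

section ColoredInvolution

/-- The nonempty involutions in `D` of colour `t`. -/
abbrev ColoredInvolution (D : Set SizedPerm) (N : ℕ) (t : Color N) : Type :=
  {p : SizedPerm // (p ∈ D ∧ 0 < p.1 ∧ color N p = t) ∧ p.inv = p}

/-- The generating function of the involutions in `D` of a given colour. -/
noncomputable def involutionGenFun (D : Set SizedPerm) (N : ℕ) (t : Color N) : ℚ⟦X⟧ :=
  weightGenFun ℚ fun p : ColoredInvolution D N t ↦ p.1.1

theorem constantCoeff_involutionGenFun (t : Color N) :
    PowerSeries.constantCoeff (involutionGenFun D N t) = 0 :=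
  constantCoeff_weightGenFun fun p ↦ p.2.1.2.1

theorem finite_coloredInvolution_size_eq (t : Color N) (n : ℕ) :
    Finite {p : ColoredInvolution D N t // p.1.1 = n} :=
  finite_fiber_of_injective finite_size_eq Subtype.val_injective (fun _ ↦ le_rfl) n

end ColoredInvolution

section SkewIndecomposable

theorem InflationRule.Produces.symmetric {r : InflationRule D N} {p : SizedPerm}
    (h : r.Produces p) (hp : p.SkewIndecomposable) (hinv : p.inv = p) : r.1.1.2⁻¹ = r.1.1.2 ∧
      ∃ a, IsCanonicalInflation r.1.1.2 a ∧ (∀ i, color N (a i) = r.2 i) ∧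
        inflate r.1.1.2 a = p ∧ ∀ i, a (r.1.1.2 i) = (a i).inv := by
  obtain ⟨a, ha, hc, rfl⟩ := h
  obtain ⟨hs, hsymm⟩ := ha.symmetric_of_inv_eq (fun h ↦ hp (ha.isInflationOf_iff.2 h)) hinv
  exact ⟨hs, a, ha, hc, rfl, hsymm⟩

namespace IsSymmetricClass

/-- Inflation as a bijection from the sequences of blocks of the colours prescribed by `r` that are
symmetric under inversion to the skew-indecomposable involutions produced by `r`, as soon as there
is one. -/
noncomputable def symmetricInflationEquiv (hD : IsSymmetricClass D N) {r : InflationRule D N}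
    (p : {p : ColoredInvolution D N t // p.1.SkewIndecomposable ∧ r.Produces p.1}) :
    {a : ∀ i, Colored D N (r.2 i) // ∀ i, (a (r.1.1.2 i)).1 = (a i).1.inv} ≃
      {p : ColoredInvolution D N t // p.1.SkewIndecomposable ∧ r.Produces p.1} := by
  have hs := (p.2.2.symmetric p.2.1 p.1.2.2).1
  let e := hD.inflationEquiv ⟨⟨p.1.1, p.1.2.1⟩, p.2.2⟩
  refine Equiv.ofBijective (fun a ↦ ⟨⟨(e a.1).1.1, (e a.1).1.2, inv_inflate_of_symmetric hs a.2⟩,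
    p.2.1.of_color_eq (p.1.2.1.2.2.trans (e a.1).1.2.2.2.symm), (e a.1).2⟩)
    ⟨fun a b h ↦ ?_, fun q ↦ ?_⟩
  · exact Subtype.ext (e.injective (Subtype.ext (Subtype.ext (congrArg (fun z ↦ z.1.1) h))))
  · obtain ⟨-, a, ha, hc, heq, hsymm⟩ := q.2.2.symmetric q.2.1 q.1.2.2
    exact ⟨⟨fun i ↦ ⟨a i, hD.of_isPatternOf (component_isPatternOf_inflate _ a i)
      (heq ▸ q.1.2.1.1), ha.pos i, hc i⟩, hsymm⟩, Subtype.ext (Subtype.ext heq)⟩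

theorem symmetricInflationEquiv_apply (hD : IsSymmetricClass D N) {r : InflationRule D N}
    (p : {p : ColoredInvolution D N t // p.1.SkewIndecomposable ∧ r.Produces p.1})
    (a : {a : ∀ i, Colored D N (r.2 i) // ∀ i, (a (r.1.1.2 i)).1 = (a i).1.inv}) :
    (hD.symmetricInflationEquiv p a).1.1 = inflate r.1.1.2 fun i ↦ (a.1 i).1 := rfl

theorem weightGenFun_skewIndecomposable_produces (hD : IsSymmetricClass D N)
    {r : InflationRule D N} (hs : Function.Involutive r.1.1.2)
    (p : {p : ColoredInvolution D N t // p.1.SkewIndecomposable ∧ r.Produces p.1}) :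
    (weightGenFun ℚ fun p : {p : ColoredInvolution D N t //
        p.1.SkewIndecomposable ∧ r.Produces p.1} ↦ p.1.1.1) =
      (∏ i : {i // r.1.1.2 i = i}, involutionGenFun D N (r.2 i)) *
        ∏ i : {i // i < r.1.1.2 i}, coloredGenFun D N (r.2 i) := by
  have inv_colored (i) (q : SizedPerm) (hq : q ∈ D ∧ 0 < q.1 ∧ color N q = r.2 i) :
      q.inv ∈ D ∧ 0 < q.inv.1 ∧ color N q.inv = r.2 (r.1.1.2 i) := by
    obtain ⟨-, a, -, hc, -, hsymm⟩ := p.2.2.symmetric p.2.1 p.1.2.2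
    refine ⟨hD.inv_mem hq.1, hq.2.1, ?_⟩
    rw [← hc, hsymm]
    exact color_inv (hq.2.2.trans (hc i).symm)
  refine (weightGenFun_congr (hD.symmetricInflationEquiv p) fun a ↦ ?_).symm.trans
    (weightGenFun_equivariant hs inv_inv inv_colored finite_size_eq fun _ ↦ rfl)
  rw [symmetricInflationEquiv_apply, inflate_fst]

theorem isProperIn_weightGenFun_skewIndecomposable_produces (hD : IsSymmetricClass D N)
    (t : Color N) (r : InflationRule D N) : IsProperIn (involutionGenFun D N)
      (weightGenFun ℚ fun p : {p : ColoredInvolution D N t //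
        p.1.SkewIndecomposable ∧ r.Produces p.1} ↦ p.1.1.1) := by
  rcases isEmpty_or_nonempty {p : ColoredInvolution D N t //
    p.1.SkewIndecomposable ∧ r.Produces p.1} with h | ⟨⟨p⟩⟩
  · rw [weightGenFun_of_isEmpty]
    exact .of_isAlgebraic _ isAlgebraic_zero
  have hs : Function.Involutive r.1.1.2 := fun i ↦
    (Equiv.Perm.eq_inv_iff_eq.1 (by rw [(p.2.2.symmetric p.2.1 p.1.2.2).1]) :)
  rw [hD.weightGenFun_skewIndecomposable_produces hs p]
  by_cases h : ∃ i, i < r.1.1.2 i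
  · obtain ⟨i, hi⟩ := h
    rw [mul_comm]
    refine .mul_prod (Finset.prod_induction _ (IsAlgebraic (Polynomial ℚ))
      (fun _ _ ↦ IsAlgebraic.mul) isAlgebraic_one fun i _ ↦ hD.isAlgebraic_coloredGenFun _) ?_
      fun i : {i // r.1.1.2 i = i} ↦ r.2 i
    rw [map_prod]
    exact Finset.prod_eq_zero (Finset.mem_univ ⟨i, hi⟩) (constantCoeff_coloredGenFun _)
  · push Not at h
    have hfix (i) : r.1.1.2 i = i := (h i).antisymm ((hs i).symm.trans_le (h _))
    have : IsEmpty {i // i < r.1.1.2 i} := ⟨fun i ↦ i.2.not_ge (h i.1)⟩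
    rw [Finset.prod_of_isEmpty (ι := {i // i < r.1.1.2 i}), mul_one]
    refine .prod ?_ fun i : {i // r.1.1.2 i = i} ↦ r.2 i
    obtain ⟨a, ha, -⟩ := p.2.2
    rw [Fintype.card_congr (Equiv.subtypeUnivEquiv hfix), Fintype.card_fin]
    exact Nat.ne_of_gt ha.two_le

end IsSymmetricClass

end SkewIndecomposable

section InvolutionRule

/-- The shapes of involutions: a single point, a skew-indecomposable inflation, and the skew sums
`a ⊖ a⁻¹` and `a ⊖ m ⊖ a⁻¹` where `a` is skew indecomposable and `m` is an involution. The blocks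
are specified by their colours. -/
inductive InvolutionRule (D : Set SizedPerm) (N : ℕ) : Type
  | point
  | inflation (r : InflationRule D N)
  | pair (c : Color N)
  | triple (c d : Color N)

/-- `p` has the shape prescribed by the rule. -/
def InvolutionRule.Produces : InvolutionRule D N → SizedPerm → Prop
  | point, p => p.1 = 1
  | inflation r, p => p.SkewIndecomposable ∧ r.Produces p
  | pair c, p => ∃ a, a.SkewIndecomposable ∧ 0 < a.1 ∧ color N a = c ∧ skewSum a a.inv = p
  | triple c d, p => ∃ a m, a.SkewIndecomposable ∧ 0 < a.1 ∧ color N a = c ∧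
      0 < m.1 ∧ m.inv = m ∧ color N m = d ∧ skewSum a (skewSum m a.inv) = p

theorem IsFinSimpleClass.finite_involutionRule (hD : IsFinSimpleClass D) :
    Finite (InvolutionRule D N) := by
  have := hD.finite_inflationRule (N := N)
  let f : Unit ⊕ InflationRule D N ⊕ Color N ⊕ Color N × Color N → InvolutionRule D N :=
    Sum.elim (fun _ ↦ .point) (Sum.elim .inflation (Sum.elim .pair fun x ↦ .triple x.1 x.2))
  refine Finite.of_surjective f ?_
  rintro (_ | r | c | ⟨c, d⟩)
  exacts [⟨.inl (), rfl⟩, ⟨.inr (.inl r), rfl⟩, ⟨.inr (.inr (.inl c)), rfl⟩,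
    ⟨.inr (.inr (.inr (c, d))), rfl⟩]

theorem IsFinSimpleClass.exists_involutionRule_produces (hD : IsFinSimpleClass D) {p : SizedPerm}
    (hp : p ∈ D) (hp0 : 0 < p.1) (hinv : p.inv = p) : ∃ o : InvolutionRule D N, o.Produces p := by
  by_cases h1 : p.1 = 1
  · exact ⟨.point, h1⟩
  by_cases h : p.SkewIndecomposable
  · obtain ⟨r, hr⟩ := hD.exists_produces (N := N) hp
      (Nat.one_lt_iff_ne_zero_and_ne_one.2 ⟨hp0.ne', h1⟩)
    exact ⟨.inflation r, h, hr⟩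
  · obtain ⟨a, ha, ha0, rfl | ⟨m, hm0, hm, rfl⟩⟩ := exists_eq_skewSum_of_inv_eq hinv h
    · exact ⟨.pair _, a, ha, ha0, rfl, rfl⟩
    · exact ⟨.triple _ _, a, m, ha, ha0, rfl, hm0, hm, rfl, rfl⟩

namespace InvolutionRule

theorem Produces.not_skewIndecomposable_of_pair {p : SizedPerm}
    (h : (pair c : InvolutionRule D N).Produces p) : ¬p.SkewIndecomposable := by
  obtain ⟨a, -, ha0, -, rfl⟩ := h
  exact not_skewIndecomposable_skewSum ha0 ha0

theorem Produces.not_skewIndecomposable_of_triple {p : SizedPerm}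
    (h : (triple c d : InvolutionRule D N).Produces p) : ¬p.SkewIndecomposable := by
  obtain ⟨a, m, -, ha0, -, hm0, -, -, rfl⟩ := h
  exact not_skewIndecomposable_skewSum ha0 (skewSum_fst_pos _ hm0)

theorem Produces.unique_of_skewIndecomposable {o o' : InvolutionRule D N} {p : SizedPerm}
    (h : o.Produces p) (h' : o'.Produces p) (hp : p.SkewIndecomposable) : o = o' := by
  rcases o with _ | r | c | ⟨c, d⟩ <;> rcases o' with _ | r' | c' | ⟨c', d'⟩
  case point.point => rfl
  case point.inflation => exact absurd h (Nat.ne_of_gt h'.2.two_le)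
  case inflation.point => exact absurd h' (Nat.ne_of_gt h.2.two_le)
  case inflation.inflation => rw [h.2.unique h'.2]
  case pair.point | pair.inflation | pair.pair | pair.triple =>
    exact absurd hp h.not_skewIndecomposable_of_pair
  case triple.point | triple.inflation | triple.pair | triple.triple =>
    exact absurd hp h.not_skewIndecomposable_of_triple
  case point.pair | inflation.pair => exact absurd hp h'.not_skewIndecomposable_of_pair
  case point.triple | inflation.triple => exact absurd hp h'.not_skewIndecomposable_of_triple

theorem Produces.unique {o o' : InvolutionRule D N} {p : SizedPerm} (h : o.Produces p)
    (h' : o'.Produces p) : o = o' := by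
  by_cases hp : p.SkewIndecomposable
  · exact h.unique_of_skewIndecomposable h' hp
  rcases o with _ | r | c | ⟨c, d⟩
  · exact absurd (skewIndecomposable_of_size_eq_one h) hp
  · exact absurd h.1 hp
  all_goals rcases o' with _ | r' | c' | ⟨c', d'⟩
  case pair.point | triple.point => exact absurd (skewIndecomposable_of_size_eq_one h') hp
  case pair.inflation | triple.inflation => exact absurd h'.1 hp
  case pair.pair =>
    obtain ⟨a, ha, ha0, rfl, rfl⟩ := h
    obtain ⟨a', ha', ha0', rfl, heq⟩ := h'
    rw [(skewSum_inj (b := a'.inv) (b' := a.inv) ha' ha ha0' ha0' ha0 ha0 heq).1]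
  case pair.triple =>
    obtain ⟨a, ha, ha0, -, rfl⟩ := h
    obtain ⟨a', m', ha', ha0', -, hm0', -, -, heq⟩ := h'
    exact absurd heq.symm (skewSum_inv_ne_skewSum_skewSum_inv ha' ha ha0' ha0 hm0')
  case triple.pair =>
    obtain ⟨a, m, ha, ha0, -, hm0, -, -, rfl⟩ := h
    obtain ⟨a', ha', ha0', -, heq⟩ := h'
    exact absurd heq (skewSum_inv_ne_skewSum_skewSum_inv ha ha' ha0 ha0' hm0)
  case triple.triple =>
    obtain ⟨a, m, ha, ha0, rfl, hm0, hm, rfl, rfl⟩ := h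
    obtain ⟨a', m', ha', ha0', rfl, hm0', hm', rfl, heq⟩ := h'
    obtain ⟨rfl, rfl⟩ := skewSum_skewSum_inv_inj ha' ha ha0' ha0 hm0' hm0 hm' hm heq
    rfl

end InvolutionRule

end InvolutionRule

section MirrorSum

open InvolutionRule

namespace IsSymmetricClass

theorem mem_of_produces_pair (hD : IsSymmetricClass D N) {p : SizedPerm}
    (h : (pair c : InvolutionRule D N).Produces p) (hp : p ∈ D) (a : Colored D N c) :
    a.1.SkewIndecomposable ∧ skewSum a.1 a.1.inv ∈ D ∧
      color N (skewSum a.1 a.1.inv) = color N p := by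
  obtain ⟨b, hb, hb0, hc, rfl⟩ := h
  have hab : color N b = color N a.1 := hc.trans a.2.2.2.symm
  exact ⟨hb.of_color_eq hab, hD.skewSum_mem (b := b.inv) hab (color_inv hab) hb0 hb0 hp a.2.1
    (hD.inv_mem a.2.1), (color_skewSum_eq (b := b.inv) (b' := a.1.inv) hab (color_inv hab) hb0 hb0
      a.2.2.1 a.2.2.1).symm⟩

/-- The map `a ↦ a ⊖ a⁻¹` as a bijection onto the involutions of this shape, as soon as there is
one. -/
noncomputable def pairEquiv (hD : IsSymmetricClass D N)
    (p : {p : ColoredInvolution D N t // (pair c : InvolutionRule D N).Produces p.1}) :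
    Colored D N c ≃
      {p : ColoredInvolution D N t // (pair c : InvolutionRule D N).Produces p.1} := by
  have key := hD.mem_of_produces_pair p.2 p.1.2.1.1
  refine Equiv.ofBijective (fun a ↦ ⟨⟨skewSum a.1 a.1.inv, ⟨(key a).2.1,
    skewSum_fst_pos _ a.2.2.1, (key a).2.2.trans p.1.2.1.2.2⟩, by rw [inv_skewSum, inv_inv]⟩,
    a.1, (key a).1, a.2.2.1, a.2.2.2, rfl⟩) ⟨fun a b h ↦ ?_, fun q ↦ ?_⟩
  · exact Subtype.ext (skewSum_inj (b := a.1.inv) (b' := b.1.inv) (key a).1 (key b).1 a.2.2.1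
      a.2.2.1 b.2.2.1 b.2.2.1 (congrArg (fun z ↦ z.1.1) h)).1
  · obtain ⟨a, -, ha0, hc, h⟩ := q.2
    exact ⟨⟨a, hD.of_isPatternOf (h ▸ isPatternOf_skewSum_left a a.inv) q.1.2.1.1, ha0, hc⟩,
      Subtype.ext (Subtype.ext h)⟩

theorem pairEquiv_apply (hD : IsSymmetricClass D N)
    (p : {p : ColoredInvolution D N t // (pair c : InvolutionRule D N).Produces p.1})
    (a : Colored D N c) : (hD.pairEquiv p a).1.1 = skewSum a.1 a.1.inv := rfl

theorem mem_of_produces_triple (hD : IsSymmetricClass D N) {p : SizedPerm}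
    (h : (triple c d : InvolutionRule D N).Produces p) (hp : p ∈ D) (a : Colored D N c)
    (m : Colored D N d) : a.1.SkewIndecomposable ∧ skewSum a.1 (skewSum m.1 a.1.inv) ∈ D ∧
      color N (skewSum a.1 (skewSum m.1 a.1.inv)) = color N p := by
  obtain ⟨b, n, hb, hb0, hc, hn0, -, hd, rfl⟩ := h
  have hab : color N b = color N a.1 := hc.trans a.2.2.2.symm
  have hmn : color N n = color N m.1 := hd.trans m.2.2.2.symm
  have hright := color_skewSum_eq (b := b.inv) (b' := a.1.inv) hmn (color_inv hab) hn0 hb0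
    m.2.2.1 a.2.2.1
  have hmem : skewSum m.1 a.1.inv ∈ D := hD.skewSum_mem (b := b.inv) hmn (color_inv hab) hn0 hb0
    (hD.of_isPatternOf (isPatternOf_skewSum_right _ _) hp) m.2.1 (hD.inv_mem a.2.1)
  have hn0' := skewSum_fst_pos b.inv hn0
  exact ⟨hb.of_color_eq hab, hD.skewSum_mem hab hright hb0 hn0' hp a.2.1 hmem,
    (color_skewSum_eq hab hright hb0 hn0' a.2.2.1 (skewSum_fst_pos _ m.2.2.1)).symm⟩

/-- The map `(a, m) ↦ a ⊖ m ⊖ a⁻¹` as a bijection onto the involutions of this shape, as soon as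
there is one. -/
noncomputable def tripleEquiv (hD : IsSymmetricClass D N)
    (p : {p : ColoredInvolution D N t // (triple c d : InvolutionRule D N).Produces p.1}) :
    Colored D N c × ColoredInvolution D N d ≃
      {p : ColoredInvolution D N t // (triple c d : InvolutionRule D N).Produces p.1} := by
  have key (x : Colored D N c × ColoredInvolution D N d) :=
    hD.mem_of_produces_triple p.2 p.1.2.1.1 x.1 ⟨x.2.1, x.2.2.1⟩
  refine Equiv.ofBijective (fun x ↦ ⟨⟨skewSum x.1.1 (skewSum x.2.1 x.1.1.inv), ⟨(key x).2.1,
    skewSum_fst_pos _ x.1.2.2.1, (key x).2.2.trans p.1.2.1.2.2⟩,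
    by rw [inv_skewSum, inv_skewSum, inv_inv, x.2.2.2, skewSum_assoc]⟩,
    x.1.1, x.2.1, (key x).1, x.1.2.2.1, x.1.2.2.2, x.2.2.1.2.1, x.2.2.2, x.2.2.1.2.2, rfl⟩)
    ⟨fun x y h ↦ ?_, fun q ↦ ?_⟩
  · obtain ⟨ha, hm⟩ := skewSum_skewSum_inv_inj (key x).1 (key y).1 x.1.2.2.1 y.1.2.2.1
      x.2.2.1.2.1 y.2.2.1.2.1 x.2.2.2 y.2.2.2 (congrArg (fun z ↦ z.1.1) h)
    exact Prod.ext (Subtype.ext ha) (Subtype.ext hm)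
  · obtain ⟨a, m, -, ha0, hc, hm0, hm, hd, h⟩ := q.2
    have hmem := q.1.2.1.1
    rw [← h] at hmem
    exact ⟨⟨⟨a, hD.of_isPatternOf (isPatternOf_skewSum_left _ _) hmem, ha0, hc⟩,
      ⟨m, ⟨hD.of_isPatternOf ((isPatternOf_skewSum_left _ _).trans
        (isPatternOf_skewSum_right _ _)) hmem, hm0, hd⟩, hm⟩⟩, Subtype.ext (Subtype.ext h)⟩

theorem tripleEquiv_apply (hD : IsSymmetricClass D N)
    (p : {p : ColoredInvolution D N t // (triple c d : InvolutionRule D N).Produces p.1})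
    (x : Colored D N c × ColoredInvolution D N d) :
    (hD.tripleEquiv p x).1.1 = skewSum x.1.1 (skewSum x.2.1 x.1.1.inv) := rfl

theorem weightGenFun_pair (hD : IsSymmetricClass D N)
    (p : {p : ColoredInvolution D N t // (pair c : InvolutionRule D N).Produces p.1}) :
    (weightGenFun ℚ fun p : {p : ColoredInvolution D N t //
      (pair c : InvolutionRule D N).Produces p.1} ↦ p.1.1.1) = coloredGenFun D N c := by
  refine (weightGenFun_congr (hD.pairEquiv p) fun a ↦ ?_).symm
  rw [pairEquiv_apply, skewSum_fst]
  exact (two_mul _).symm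

theorem weightGenFun_triple (hD : IsSymmetricClass D N)
    (p : {p : ColoredInvolution D N t // (triple c d : InvolutionRule D N).Produces p.1}) :
    (weightGenFun ℚ fun p : {p : ColoredInvolution D N t //
      (triple c d : InvolutionRule D N).Produces p.1} ↦ p.1.1.1) =
      coloredGenFun D N c * involutionGenFun D N d := by
  refine (weightGenFun_congr (hD.tripleEquiv p) fun x ↦ ?_).symm.trans
    (weightGenFun_prod (fun a : Colored D N c ↦ 2 * a.1.1) (fun m : ColoredInvolution D N d ↦ m.1.1)
      (finite_colored_two_mul_size_eq c) (finite_coloredInvolution_size_eq d))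
  rw [tripleEquiv_apply, skewSum_fst, skewSum_fst, two_mul, add_right_comm, ← add_assoc]
  rfl

end IsSymmetricClass

end MirrorSum

section Algebraicity

namespace IsSymmetricClass

theorem isProperIn_weightGenFun_involutionRule (hD : IsSymmetricClass D N) (t : Color N)
    (o : InvolutionRule D N) : IsProperIn (involutionGenFun D N)
      (weightGenFun ℚ fun p : {p : ColoredInvolution D N t // o.Produces p.1} ↦ p.1.1.1) := by
  rcases isEmpty_or_nonempty {p : ColoredInvolution D N t // o.Produces p.1} with h | ⟨⟨p⟩⟩
  · rw [weightGenFun_of_isEmpty]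
    exact .of_isAlgebraic _ isAlgebraic_zero
  rcases o with _ | r | c | ⟨c, d⟩
  · have : Finite {p : ColoredInvolution D N t //
        (InvolutionRule.point : InvolutionRule D N).Produces p.1} :=
      finite_coloredInvolution_size_eq t 1
    exact .of_isAlgebraic _ (isAlgebraic_weightGenFun_of_finite _)
  · exact hD.isProperIn_weightGenFun_skewIndecomposable_produces t r
  · rw [hD.weightGenFun_pair p]
    exact .of_isAlgebraic _ (hD.isAlgebraic_coloredGenFun c)
  · rw [hD.weightGenFun_triple p, ← Fintype.prod_unique fun _ : Unit ↦ involutionGenFun D N d]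
    exact .mul_prod (hD.isAlgebraic_coloredGenFun c) (constantCoeff_coloredGenFun c) fun _ ↦ d

theorem isAlgebraic_involutionGenFun (hD : IsSymmetricClass D N) (t : Color N) :
    IsAlgebraic (Polynomial ℚ) (involutionGenFun D N t) := by
  have := hD.finite_involutionRule (N := N)
  have := Fintype.ofFinite (InvolutionRule D N)
  refine isAlgebraic_of_isProperIn constantCoeff_involutionGenFun (fun t ↦ ?_) t
  have existsUnique_produces (p : ColoredInvolution D N t) :
      ∃! o : InvolutionRule D N, o.Produces p.1 :=
    existsUnique_of_exists_of_unique
      (hD.exists_involutionRule_produces p.2.1.1 p.2.1.2.1 p.2.2) fun _ _ ↦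
      InvolutionRule.Produces.unique
  rw [involutionGenFun, weightGenFun_eq_sum_subtype _ (finite_coloredInvolution_size_eq t)
    existsUnique_produces]
  exact .sum fun o _ ↦ hD.isProperIn_weightGenFun_involutionRule t o

end IsSymmetricClass

end Algebraicity

section PermClass

/-- The members of `C` whose inverse lies in `C` as well. This is the largest class inside `C` that
is closed under inversion, and it has the same involutions as `C`. -/
def symmetricPart (C : ∀ n, Set (Perm n)) : Set SizedPerm :=
  {p | p.2 ∈ C p.1 ∧ p.inv.2 ∈ C p.1}

theorem inv_mem_symmetricPart {p : SizedPerm} (hp : p ∈ symmetricPart C) :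
    p.inv ∈ symmetricPart C :=
  ⟨hp.2, (congrArg (fun q : SizedPerm ↦ q.2 ∈ C q.1) p.inv_inv).mpr hp.1⟩

theorem inv_eq_self_iff {p : SizedPerm} : p.inv = p ↔ p.2⁻¹ = p.2 :=
  ⟨fun h ↦ eq_of_heq (Sigma.mk.inj_iff.1 h).2, fun h ↦ congrArg (Sigma.mk p.1) h⟩

theorem mem_symmetricPart_iff_of_inv_eq {p : SizedPerm} (h : p.inv = p) :
    p ∈ symmetricPart C ↔ p.2 ∈ C p.1 :=
  ⟨And.left, fun hp ↦ ⟨hp, (congrArg (fun q : SizedPerm ↦ q.2 ∈ C q.1) h).mpr hp⟩⟩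

theorem isFinSimpleClass_symmetricPart (hC : IsPermClass C) (hfin : FinitelyManySimples C) :
    IsFinSimpleClass (symmetricPart C) where
  of_isPatternOf h hq := ⟨hC _ _ hq.1 h.contains, hC _ _ hq.2 h.inv.contains⟩
  finite_isSimple := hfin.subset fun _ hp ↦ ⟨hp.1.1, isSimple_of_isSimple_toBiOrder hp.2⟩

theorem exists_isSymmetricClass_symmetricPart (hC : IsPermClass C)
    (hfin : FinitelyManySimples C) : ∃ N, IsSymmetricClass (symmetricPart C) N := by
  have hD := isFinSimpleClass_symmetricPart hC hfin
  obtain ⟨N, hN⟩ := hD.exists_size_bound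
  exact ⟨N, { hD with inv_mem := inv_mem_symmetricPart, exists_not_mem := hN }⟩

theorem genFun_eq_weightGenFun (S : ∀ n, Set (Perm n)) :
    genFun S = weightGenFun ℚ fun p : {p : SizedPerm // 0 < p.1 ∧ p.2 ∈ S p.1} ↦ p.1.1 := by
  ext n
  rw [genFun, coeff_weightGenFun, PowerSeries.coeff_mk]
  split_ifs with hn
  · subst hn
    have : IsEmpty {p : {p : SizedPerm // 0 < p.1 ∧ p.2 ∈ S p.1} // p.1.1 = 0} :=
      ⟨fun p ↦ p.1.2.1.ne' p.2⟩
    rw [Nat.card_of_isEmpty, Nat.cast_zero]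
  · refine congrArg _ (Nat.card_congr (Equiv.ofBijective
      (fun π ↦ ⟨⟨⟨n, π.1⟩, Nat.pos_of_ne_zero hn, π.2⟩, rfl⟩) ⟨fun π π' h ↦ ?_, ?_⟩))
    · simpa [Subtype.ext_iff] using h
    · rintro ⟨⟨⟨n, π⟩, -, hπ⟩, rfl⟩
      exact ⟨⟨π, hπ⟩, rfl⟩

theorem genFun_involutions_eq_sum [Fintype (Color N)] :
    genFun (fun n ↦ {π : Perm n | π ∈ C n ∧ π⁻¹ = π}) =
      ∑ t, involutionGenFun (symmetricPart C) N t := by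
  rw [genFun_eq_weightGenFun, weightGenFun_eq_sum_subtype _
    (finite_fiber_of_injective finite_size_eq Subtype.val_injective fun _ ↦ le_rfl)
    (P := fun t p ↦ color N p.1 = t) fun p ↦ existsUnique_eq']
  refine Finset.sum_congr rfl fun t _ ↦
    weightGenFun_congr ((Equiv.subtypeSubtypeEquivSubtypeInter _ (color N · = t)).trans
      (Equiv.subtypeEquivRight fun p ↦ ?_)) fun _ ↦ rfl
  constructor
  · rintro ⟨⟨h0, hp, hinv⟩, ht⟩
    have hinv' := inv_eq_self_iff.2 hinv
    exact ⟨⟨(mem_symmetricPart_iff_of_inv_eq hinv').2 hp, h0, ht⟩, hinv'⟩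
  · rintro ⟨⟨hp, h0, ht⟩, hinv⟩
    exact ⟨⟨h0, hp.1, inv_eq_self_iff.1 hinv⟩, ht⟩

end PermClass

end SizedPerm

/-- If `C` is a permutation class containing only finitely many simple permutations,
then the generating function of the set of involutions in `C` is algebraic over `ℚ[x]`. -/
theorem statement5 (C : ∀ n, Set (Perm n)) (hC : IsPermClass C)
    (hfin : FinitelyManySimples C) :
    IsAlgebraicOverQx (genFun fun n => {π : Perm n | π ∈ C n ∧ π⁻¹ = π}) := by
  obtain ⟨N, hD⟩ := SizedPerm.exists_isSymmetricClass_symmetricPart hC hfin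
  have := Fintype.ofFinite (SizedPerm.Color N)
  rw [SizedPerm.genFun_involutions_eq_sum (N := N)]
  exact (AlgebraicPowerSeries ℚ).sum_mem fun t _ ↦ hD.isAlgebraic_involutionGenFun t
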